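/- Let r ∈ ℕ with r ≥ 2 or r = ∞, and let f be a volume-preserving C^r diffeomorphism of T², isotopic to the identity, regularly semi-conjugate to the translation T_ω̄, where ω̄ ∈ ℝ²/ℤ² is totally irrational and super-Liouvillean. Let G_f be the set of centralizers of f in Diff^{r−1}(T², Vol) ∩ Homeo_*(T²). Then: (i) G_f is isomorphic (as a group) to an uncountable subgroup of ℝ²/ℤ²; (ii) if G_f is compact in the C⁰ topology, then f is topologically linearizable (topologically conjugate to a translation); (iii) if f is topologically linearizable, then G_f is pre-compact in the C⁰ topology. -/

import Mathlib

open Filter Topology MeasureTheory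

noncomputable section

/-- The plane ℝ². -/
abbrev R2 : Type := ℝ × ℝ

/-- The Euclidean norm on ℝ². -/
def enorm2 (v : R2) : ℝ := Real.sqrt (v.1 ^ 2 + v.2 ^ 2)

/-- The two-torus 𝕋² = ℝ²/ℤ². -/
abbrev T2 : Type := AddCircle (1 : ℝ) × AddCircle (1 : ℝ)

/-- The covering projection π : ℝ² → 𝕋². -/
def pr2 (v : R2) : T2 := ((v.1 : AddCircle (1 : ℝ)), (v.2 : AddCircle (1 : ℝ)))

/-- The integer vector (v₁, v₂) regarded as a point of ℝ². -/
def intVec (v : ℤ × ℤ) : R2 := ((v.1 : ℝ), (v.2 : ℝ))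

/-- The distance on 𝕋² induced by the Euclidean metric on ℝ². -/
def distT2 (x y : T2) : ℝ :=
  sInf {r | ∃ a b : R2, pr2 a = x ∧ pr2 b = y ∧ r = enorm2 (a - b)}

/-- The C⁰ distance between two maps of 𝕋². -/
def dC0 (f g : T2 → T2) : ℝ := ⨆ x : T2, distT2 (f x) (g x)

/-- `F : ℝ² → ℝ²` is a lift of `f : 𝕋² → 𝕋²`, i.e. π ∘ F = f ∘ π. -/
def IsLift (F : R2 → R2) (f : T2 → T2) : Prop := ∀ z : R2, pr2 (F z) = f (pr2 z)

/-- `F` commutes with the deck transformations of π : ℝ² → 𝕋². -/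
def Equivariant (F : R2 → R2) : Prop :=
  ∀ (z : R2) (v : ℤ × ℤ), F (z + intVec v) = F z + intVec v

/-- `f` is a homeomorphism of 𝕋² isotopic to the identity (equivalently, admitting an
equivariant lift to ℝ²). -/
def IsotopicToId (f : T2 → T2) : Prop :=
  IsHomeomorph f ∧ ∃ F : R2 → R2, IsHomeomorph F ∧ IsLift F f ∧ Equivariant F

/-- The Misiurewicz–Ziemian rotation set of a lift `F`. -/
def rotSet (F : R2 → R2) : Set R2 :=
  {v | ∃ (z : ℕ → R2) (n : ℕ → ℕ), Tendsto n atTop atTop ∧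
      Tendsto (fun i => ((n i : ℝ))⁻¹ • (F^[n i] (z i) - z i)) atTop (𝓝 v)}

/-- Bounded mean motion, with bound κ, for a lift `F` with rotation vector `ω`:
‖Fⁿ(z) − z − nω‖ ≤ κ for all z and n. -/
def BoundedMeanMotion (F : R2 → R2) (ω : R2) (κ : ℝ) : Prop :=
  ∀ (z : R2) (n : ℕ), enorm2 (F^[n] z - z - (n : ℝ) • ω) ≤ κ

/-- The standard scalar product on ℝ². -/
def inner2 (u v : R2) : ℝ := u.1 * v.1 + u.2 * v.2

/-- v^⊥ = (−v₂, v₁)/‖v‖. -/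
def perp2 (v : R2) : R2 := (-v.2 / enorm2 v, v.1 / enorm2 v)

/-- Bounded deviation parallel to `v`, with bound κ, for a lift `F` with rotation vector `ω`:
|⟨Fⁿ(z) − z − nω, v^⊥⟩| ≤ κ for all z and n. -/
def BoundedDeviation (F : R2 → R2) (ω : R2) (v : R2) (κ : ℝ) : Prop :=
  ∀ (z : R2) (n : ℕ), |inner2 (F^[n] z - z - (n : ℝ) • ω) (perp2 v)| ≤ κ

/-- ‖ω‖_{𝕋²} = min over integer vectors z of ‖ω − z‖. -/
def normT2 (ω : R2) : ℝ := ⨅ v : ℤ × ℤ, enorm2 (ω - intVec v)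

/-- The super-Liouvillean condition: liminf_{n→∞} n⁻¹ ln ‖nω‖_{𝕋²} = −∞. -/
def SuperLiouville (ω : R2) : Prop :=
  ∀ M : ℝ, ∃ᶠ n : ℕ in atTop, (n : ℝ)⁻¹ * Real.log (normT2 ((n : ℝ) • ω)) < M

/-- The strong super-Liouvillean condition: liminf_{n→∞} n⁻¹ aⁿ ln ‖nω‖_{𝕋²} = −∞. -/
def StrongSuperLiouville (a : ℝ) (ω : R2) : Prop :=
  ∀ M : ℝ, ∃ᶠ n : ℕ in atTop, (n : ℝ)⁻¹ * a ^ n * Real.log (normT2 ((n : ℝ) • ω)) < M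

/-- ω ∈ ℝ² is irrational if ω ∉ ℚ². -/
def IrrationalVec (ω : R2) : Prop := ¬ ∃ q : ℚ × ℚ, ω = ((q.1 : ℝ), (q.2 : ℝ))

/-- ω is totally irrational if ω₁, ω₂, 1 are rationally independent. -/
def TotallyIrrationalVec (ω : R2) : Prop :=
  ∀ d1 d2 e : ℤ, (d1 : ℝ) * ω.1 + (d2 : ℝ) * ω.2 + (e : ℝ) = 0 → d1 = 0 ∧ d2 = 0 ∧ e = 0

/-- ω is semi-irrational: irrational but not totally irrational. -/
def SemiIrrationalVec (ω : R2) : Prop := IrrationalVec ω ∧ ¬ TotallyIrrationalVec ω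

/-- `v` is a character vector of the semi-irrational vector ω. -/
def IsCharacterVector (ω : R2) (v : R2) : Prop :=
  ∃ c d : ℤ, Int.gcd c d = 1 ∧ (∃ e : ℚ, (c : ℝ) * ω.1 + (d : ℝ) * ω.2 + (e : ℝ) = 0) ∧
    v = ((d : ℝ), (-c : ℝ))

/-- `f` is Hölder continuous with exponent `a`. -/
def HolderMap (a : ℝ) (f : T2 → T2) : Prop :=
  ∃ C : ℝ, ∀ x y : T2, distT2 (f x) (f y) ≤ C * distT2 x y ^ a

/-- C⁰-rigidity: liminf_{n→∞} d_{C⁰}(fⁿ, Id) = 0. -/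
def C0Rigid (f : T2 → T2) : Prop :=
  ∀ ε : ℝ, 0 < ε → ∃ᶠ n : ℕ in atTop, dC0 (f^[n]) id < ε

/-- `f` is a C^r diffeomorphism of 𝕋², expressed via a C^r lift with a C^r inverse. -/
def IsCrDiffeo (r : ℕ∞) (f : T2 → T2) : Prop :=
  ∃ F G : R2 → R2, IsLift F f ∧ Function.LeftInverse G F ∧ Function.RightInverse G F ∧
    ContDiff ℝ r F ∧ ContDiff ℝ r G

/-- C^k-rigidity: some sequence of iterates f^{n_j}, n_j → ∞, converges to the identity in the
C^k topology, i.e. admits lifts converging to the identity uniformly together with all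
derivatives of order ≤ k. -/
def CkRigid (k : ℕ∞) (f : T2 → T2) : Prop :=
  ∃ n : ℕ → ℕ, Tendsto n atTop atTop ∧
    ∃ F : ℕ → R2 → R2, (∀ j, IsLift (F j) (f^[n j])) ∧
      ∀ i : ℕ, (i : ℕ∞) ≤ k →
        Tendsto (fun j => ⨆ z : R2, ‖iteratedFDeriv ℝ i (fun w => F j w - w) z‖)
          atTop (𝓝 0)

/-- ‖x‖_𝕋 : the distance from x ∈ ℝ to the nearest integer. -/
def dT (x : ℝ) : ℝ := |x - round x|

/-- `q` is the sequence of denominators of the best rational approximations of β. -/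
def BestDenomSeq (β : ℝ) (q : ℕ → ℕ) : Prop :=
  q 0 = 1 ∧ ∀ n : ℕ,
    q n < q (n + 1) ∧
    (∀ m : ℕ, 1 ≤ m → m < q (n + 1) → dT ((q n : ℝ) * β) ≤ dT ((m : ℝ) * β)) ∧
    dT ((q n : ℝ) * β) < 1 / (q (n + 1) : ℝ)

/-- β is of non-Brjuno type: Σ_n (ln q_{n+1})/q_n = ∞. -/
def NonBrjunoNum (β : ℝ) : Prop :=
  ∀ q : ℕ → ℕ, BestDenomSeq β q → ¬ Summable fun n => Real.log (q (n + 1) : ℝ) / (q n : ℝ)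

/-- Character data of a semi-irrational vector ω: (c,d) ∈ ℤ² with gcd(c,d)=1 and
e = p/q ∈ ℚ in lowest terms with q > 0 such that c ω₁ + d ω₂ + p/q = 0. -/
def IsCharData (ω : R2) (c d p q : ℤ) : Prop :=
  Int.gcd c d = 1 ∧ Int.gcd p q = 1 ∧ 0 < q ∧
    (c : ℝ) * ω.1 + (d : ℝ) * ω.2 + (p : ℝ) / (q : ℝ) = 0

/-- ω is of strong non-Brjuno type: its character frequency 𝓕(ω̄) is of non-Brjuno type. -/
def StrongNonBrjuno (ω : R2) : Prop :=
  ∃ c d p q a b : ℤ, IsCharData ω c d p q ∧ a * d - b * c = 1 ∧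
    NonBrjunoNum (dT ((q : ℝ) * ((a : ℝ) * ω.1 + (b : ℝ) * ω.2)))

/-- The linear action of the integer matrix [[a,b],[c,d]] on ℝ². -/
def AactZ (a b c d : ℤ) (z : R2) : R2 :=
  ((a : ℝ) * z.1 + (b : ℝ) * z.2, (c : ℝ) * z.1 + (d : ℝ) * z.2)

/-- The operator norm (w.r.t. the Euclidean norm) of the matrix [[a,b],[c,d]]. -/
def AOpNormZ (a b c d : ℤ) : ℝ :=
  sSup {r | ∃ u : R2, enorm2 u ≤ 1 ∧
    r = enorm2 ((a : ℝ) * u.1 + (b : ℝ) * u.2, (c : ℝ) * u.1 + (d : ℝ) * u.2)}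

/-- Membership in the class 𝒞_{κ,ω̄}: pseudo-rotations with rotation vector ω̄ mod ℤ²
having bounded mean motion with bound κ. -/
def MemC (κ : ℝ) (w : T2) (f : T2 → T2) : Prop :=
  IsotopicToId f ∧ ∃ (F : R2 → R2) (ω : R2),
    IsLift F f ∧ rotSet F = {ω} ∧ pr2 ω = w ∧ BoundedMeanMotion F ω κ

/-- Membership in the class 𝒟_{κ,ω̄,v}: pseudo-rotations with rotation vector ω̄ mod ℤ²
having bounded deviation parallel to v with bound κ. -/
def MemD (κ : ℝ) (w : T2) (v : R2) (f : T2 → T2) : Prop :=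
  IsotopicToId f ∧ ∃ (F : R2 → R2) (ω : R2),
    IsLift F f ∧ rotSet F = {ω} ∧ pr2 ω = w ∧ BoundedDeviation F ω v κ

/-- `h : 𝕋² → 𝕋²` is homotopic to the identity (characterised by admitting an equivariant
continuous lift). -/
def HomotopicToIdMap (h : T2 → T2) : Prop :=
  ∃ H : R2 → R2, Continuous H ∧ IsLift H h ∧ Equivariant H

/-- `f` is regularly semi-conjugate to the translation T_w : x ↦ x + w, i.e. semi-conjugate via
a continuous surjection homotopic to the identity. -/
def RegSemiConj (f : T2 → T2) (w : T2) : Prop :=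
  ∃ h : T2 → T2, Continuous h ∧ Function.Surjective h ∧ HomotopicToIdMap h ∧
    ∀ x : T2, h (f x) = h x + w

/-- `f` is topologically conjugate to a translation of 𝕋². -/
def TopLinearizable (f : T2 → T2) : Prop :=
  ∃ (w : T2) (h : T2 → T2), IsHomeomorph h ∧ ∀ x : T2, h (f x) = h x + w

/-- `f` is minimal: every orbit is dense. -/
def MinimalMap (f : T2 → T2) : Prop :=
  ∀ x : T2, Dense (Set.range fun n : ℕ => f^[n] x)

/-- The open ball in 𝕋² for the Euclidean-induced distance. -/
def ballT2 (z : T2) (r : ℝ) : Set T2 := {y | distT2 z y < r}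

/-- The diameter of a subset of 𝕋² for the Euclidean-induced distance. -/
def diamT2 (S : Set T2) : ℝ := sSup {r | ∃ x ∈ S, ∃ y ∈ S, r = distT2 x y}

/-- The Euclidean diameter of a subset of ℝ². -/
def diamE (S : Set R2) : ℝ := sSup {r | ∃ x ∈ S, ∃ y ∈ S, r = enorm2 (x - y)}

/-- `F` is a bounded (measurable) fundamental domain for the ℤ²-action on ℝ². -/
def IsBoundedFundDom (F : Set R2) : Prop :=
  MeasurableSet F ∧ Bornology.IsBounded F ∧
    (∀ x : R2, ∃ v : ℤ × ℤ, x - intVec v ∈ F) ∧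
    ∀ v : ℤ × ℤ, v ≠ 0 → F ∩ ((fun x => x + intVec v) '' F) = ∅

/-- `D` is an open topological disc in 𝕋². -/
def IsTopDisc (D : Set T2) : Prop :=
  IsOpen D ∧ Nonempty (D ≃ₜ Metric.ball (0 : R2) 1)

/-- `D` is simple with respect to the fundamental domain `F`: some connected component of
π⁻¹(D) is contained in `F`. -/
def IsSimpleDisc (D : Set T2) (F : Set R2) : Prop :=
  ∃ x ∈ pr2 ⁻¹' D, connectedComponentIn (pr2 ⁻¹' D) x ⊆ F

/-- `u` is the rotation vector of `g`, defined as the mean displacement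
∫_{𝕋²} (g̃(x̃) − x̃) dλ(x) mod ℤ² of an equivariant lift `G` of `g`. -/
def IsRotOf (g : T2 → T2) (u : T2) : Prop :=
  ∃ (G : R2 → R2) (Φ : T2 → R2), Continuous G ∧ IsLift G g ∧ Equivariant G ∧
    (∀ z : R2, Φ (pr2 z) = G z - z) ∧ u = pr2 (∫ x : T2, Φ x)

/-- The set Γ = ((ℚ×ℝ)/ℤ²) ∪ ((ℝ×ℚ)/ℤ²) of points of 𝕋² with at least one rational
coordinate. -/
def GammaSet : Set T2 :=
  {x | (∃ q : ℚ, x.1 = ((q : ℝ) : AddCircle (1 : ℝ))) ∨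
       (∃ q : ℚ, x.2 = ((q : ℝ) : AddCircle (1 : ℝ)))}

/-!
By Brouwer's lemma, a ball which is disjoint from its image under a fixed point free homeomorphism
of the plane at bounded distance from the identity is disjoint from all its iterated images. Let `F`
be a lift of `f` and `H` a lift of the semi-conjugacy `h` with `H (F z) = H z + ω`. Then `F^n - v`
has no fixed point, and the iterated images of a ball which it moves off itself stay near one
another for about `1 / ‖nω - v‖` steps; as they have the same area, the radius of the ball is
`O(√‖nω - v‖)`. Hence the displacement of `F^n - v` is `O(L^n √‖nω - v‖)`, where `L` is a Lipschitz
constant of `F`, and since `ω` is super-Liouvillean some iterates of `f` are superexponentially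
close to the identity.

Orbit segments of two such iterates join up to paths following linearly independent directions,
which must cross; therefore every continuous `f`-invariant function is constant. It follows that
`h (g x) - h x` is constant for every centralizer `g`, so `h` semi-conjugates `g` to a translation,
and the area bound shows that the translation determines `g`. If the centralizer is compact, then
it is transitive, because `inf_g dist (g x) y` is an invariant function of `x`; thus `h` is
injective. If `f` is conjugate to a translation, so is every centralizer, by the same conjugacy.

Finally, Landau–Kolmogorov interpolation upgrades closeness to the identity from `C^0` to
`C^{r-1}`: the derivatives of `F^n` up to order `r` grow at most exponentially. Composing
sufficiently sparse sequences of close returns, selected by 0/1 sequences, yields uncountably many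
centralizers.
-/

/-! ### Continuous logarithms -/

theorem sub_eq_sub_of_exp_eq_exp {X : Type*} [TopologicalSpace X] [PreconnectedSpace X]
    {u v : X → ℂ} (hu : Continuous u) (hv : Continuous v)
    (h : ∀ x, Complex.exp (u x) = Complex.exp (v x)) (x y : X) : u x - v x = u y - v y := by
  have exp_sub_eq_one (a : X) : Complex.exp (u a - v a) = 1 := by
    rw [Complex.exp_sub, h, div_self (Complex.exp_ne_zero _)]
  exact Complex.isCoveringMap_exp.const_of_comp (g := fun a => u a - v a) (by fun_prop)
    (fun a b => Subtype.ext ((exp_sub_eq_one a).trans (exp_sub_eq_one b).symm)) x y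

theorem exists_continuous_exp_eq {X : Type*} [TopologicalSpace X] [SimplyConnectedSpace X]
    [LocallyPathConnectedSpace X] {v : X → ℂ} (hv : Continuous v) (h0 : ∀ x, v x ≠ 0) :
    ∃ μ : X → ℂ, Continuous μ ∧ ∀ x, Complex.exp (μ x) = v x := by
  obtain ⟨x₀⟩ : Nonempty X := PathConnectedSpace.nonempty
  obtain ⟨μ, ⟨-, hμ⟩, -⟩ := Complex.isCoveringMapOn_exp.existsUnique_continuousMap_lifts
    ⟨v, hv⟩ (Complex.exp_log (h0 x₀)) (fun x => by simpa using h0 x)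
  exact ⟨μ, μ.continuous, congrFun hμ⟩

theorem eq_of_exp_eq_exp_of_norm_exp_sub_one_lt_one {X : Type*} [TopologicalSpace X]
    [PreconnectedSpace X] {μ : X → ℂ} (hμ : Continuous μ)
    (hnear : ∀ x, ‖Complex.exp (μ x) - 1‖ < 1) {a b : X}
    (hab : Complex.exp (μ a) = Complex.exp (μ b)) : μ a = μ b := by
  have mem_slitPlane (x : X) : Complex.exp (μ x) ∈ Complex.slitPlane := by
    simpa using Complex.mem_slitPlane_of_norm_lt_one (hnear x)
  have hconst := sub_eq_sub_of_exp_eq_exp hμ (v := fun x => Complex.log (Complex.exp (μ x)))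
    (continuous_iff_continuousAt.2 fun x => ContinuousAt.clog (by fun_prop) (mem_slitPlane x))
    (fun x => (Complex.exp_log (Complex.exp_ne_zero _)).symm) a b
  rwa [hab, sub_left_inj] at hconst

/- On the circle of radius `exp s`, run through once by `ζ ↦ exp ζ` on the line `re ζ = s`, the
quotient `exp (μ ζ)` winds around `0` as little as the constant `1` does. -/
theorem eq_of_exp_eq_exp_of_norm_exp_sub_one_lt_one_of_re_eq {μ : ℂ → ℂ} (hμ : Continuous μ)
    {s : ℝ} (hnear : ∀ ζ : ℂ, ζ.re = s → ‖Complex.exp (μ ζ) - 1‖ < 1)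
    {a b : ℂ} (ha : a.re = s) (hb : b.re = s)
    (hab : Complex.exp (μ a) = Complex.exp (μ b)) : μ a = μ b := by
  have hline (ζ : ℂ) (hζ : ζ.re = s) : (s : ℂ) + ζ.im * Complex.I = ζ := by
    rw [← hζ, Complex.re_add_im]
  have := eq_of_exp_eq_exp_of_norm_exp_sub_one_lt_one
    (μ := fun t : ℝ => μ (s + t * Complex.I)) (by fun_prop)
    (fun t => hnear _ (by simp)) (a := a.im) (b := b.im) (by rwa [hline a ha, hline b hb])
  rwa [hline a ha, hline b hb] at this

theorem norm_div_exp_sub_one_lt_one {w ζ : ℂ} {C : ℝ} (hw : ‖w - Complex.exp ζ‖ ≤ C)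
    (hC : C < Real.exp ζ.re) : ‖w / Complex.exp ζ - 1‖ < 1 := by
  rw [div_sub_one (Complex.exp_ne_zero ζ), norm_div, Complex.norm_exp,
    div_lt_one (Real.exp_pos _)]
  exact hw.trans_lt hC

/- If `Ψ` had no zero, it would have a logarithm along `ζ ↦ exp ζ`; on a large circle `Ψ` is
relatively close to the identity, so its winding number is `1` and not `0`. -/
theorem exists_eq_zero_of_norm_sub_self_le {Ψ : ℂ → ℂ} (hΨ : Continuous Ψ) {C : ℝ}
    (hC : ∀ z, ‖Ψ z - z‖ ≤ C) : ∃ z, Ψ z = 0 := by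
  by_contra! h
  obtain ⟨μ, hμ, hexp⟩ := exists_continuous_exp_eq hΨ h
  have hs : C < Real.exp C := by linarith [Real.add_one_le_exp C]
  have hper := Complex.exp_periodic C
  have := eq_of_exp_eq_exp_of_norm_exp_sub_one_lt_one_of_re_eq (s := C)
    (μ := fun ζ => μ (Complex.exp ζ) - ζ) (by fun_prop)
    (fun ζ hζ => by
      rw [Complex.exp_sub, hexp]
      exact norm_div_exp_sub_one_lt_one (hC _) (hζ ▸ hs))
    (a := C + 2 * Real.pi * Complex.I) (b := C) (by simp) (by simp)
    (by rw [Complex.exp_sub, Complex.exp_sub, hexp, hexp, hper])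
  simp [hper] at this

/-! ### Homeomorphisms at bounded distance from the identity -/

/-- The homeomorphism `K` moves points by a uniformly bounded amount, as the lifts of torus
homeomorphisms isotopic to the identity do. -/
def BoundedDisplacement {E : Type*} [NormedAddCommGroup E] (K : E ≃ₜ E) : Prop :=
  ∃ C : ℝ, ∀ z, ‖K z - z‖ ≤ C

namespace BoundedDisplacement

variable {E : Type*} [NormedAddCommGroup E] {G K : E ≃ₜ E}

theorem trans (hG : BoundedDisplacement G) (hK : BoundedDisplacement K) :
    BoundedDisplacement (G.trans K) := by
  obtain ⟨C, hC⟩ := hG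
  obtain ⟨D, hD⟩ := hK
  refine ⟨D + C, fun z => ?_⟩
  calc ‖K (G z) - z‖ ≤ ‖K (G z) - G z‖ + ‖G z - z‖ := norm_sub_le_norm_sub_add_norm_sub _ _ _
    _ ≤ D + C := add_le_add (hD _) (hC _)

theorem symm (hG : BoundedDisplacement G) : BoundedDisplacement G.symm := by
  obtain ⟨C, hC⟩ := hG
  exact ⟨C, fun z => by simpa [norm_sub_rev] using hC (G.symm z)⟩

end BoundedDisplacement

/-- `l` is a continuous logarithm of the difference quotient of `G` between `z` and
`z + exp ζ`, as a function of `(z, ζ)`. -/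
structure IsSecantLog (G : ℂ ≃ₜ ℂ) (l : ℂ × ℂ → ℂ) : Prop where
  continuous : Continuous l
  exp_eq : ∀ z ζ, Complex.exp (l (z, ζ)) = (G (z + Complex.exp ζ) - G z) / Complex.exp ζ

theorem exists_isSecantLog (G : ℂ ≃ₜ ℂ) : ∃ l, IsSecantLog G l := by
  have hG := G.continuous
  obtain ⟨l, hl, hexp⟩ := exists_continuous_exp_eq
    (v := fun p : ℂ × ℂ => (G (p.1 + Complex.exp p.2) - G p.1) / Complex.exp p.2)
    (Continuous.div (by fun_prop) (by fun_prop) fun _ => Complex.exp_ne_zero _)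
    (fun p => div_ne_zero
      (sub_ne_zero.2 (G.injective.ne (by simp [Complex.exp_ne_zero]))) (Complex.exp_ne_zero _))
  exact ⟨l, hl, fun z ζ => hexp (z, ζ)⟩

namespace IsSecantLog

variable {G : ℂ ≃ₜ ℂ} {l : ℂ × ℂ → ℂ}

theorem periodic (hl : IsSecantLog G l) (hG : BoundedDisplacement G) (z : ℂ) :
    Function.Periodic (fun ζ => l (z, ζ)) (2 * Real.pi * Complex.I) := by
  have hcont := hl.continuous
  obtain ⟨C, hC⟩ := hG
  have hs : C + C < Real.exp (C + C) := by linarith [Real.add_one_le_exp (C + C)]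
  have hexp (z ζ : ℂ) : Complex.exp (l (z, ζ + 2 * Real.pi * Complex.I))
      = Complex.exp (l (z, ζ)) := by
    rw [hl.exp_eq, hl.exp_eq, Complex.exp_periodic]
  have hsecant (ζ : ℂ) : ‖G (0 + Complex.exp ζ) - G 0 - Complex.exp ζ‖ ≤ C + C := by
    calc _ = ‖(G (Complex.exp ζ) - Complex.exp ζ) - (G 0 - 0)‖ := by
          congr 1; rw [zero_add]; ring
      _ ≤ C + C := (norm_sub_le _ _).trans (add_le_add (hC _) (hC _))
  have hbase : l (0, (C + C : ℝ) + 2 * Real.pi * Complex.I) = l (0, (C + C : ℝ)) :=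
    eq_of_exp_eq_exp_of_norm_exp_sub_one_lt_one_of_re_eq (s := C + C)
      (μ := fun ζ => l (0, ζ)) (by fun_prop)
      (fun ζ hζ => by
        rw [hl.exp_eq]
        exact norm_div_exp_sub_one_lt_one (hsecant ζ) (hζ ▸ hs))
      (by simp) (by simp) (hexp _ _)
  intro ζ
  have hconst := sub_eq_sub_of_exp_eq_exp
    (u := fun p : ℂ × ℂ => l (p.1, p.2 + 2 * Real.pi * Complex.I)) (v := l) (by fun_prop)
    hcont (fun p => hexp p.1 p.2) (z, ζ) (0, (C + C : ℝ))
  rwa [hbase, sub_self, sub_eq_zero] at hconst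

/- Swapping the end points of a secant negates both numerator and denominator, so it changes the
logarithm by a constant; doing it twice shows that the constant vanishes. -/
theorem swap (hl : IsSecantLog G l) (hG : BoundedDisplacement G) (z ζ : ℂ) :
    l (z + Complex.exp ζ, ζ + Real.pi * Complex.I) = l (z, ζ) := by
  have hcont := hl.continuous
  have exp_add_pi (ζ : ℂ) : Complex.exp (ζ + Real.pi * Complex.I) = -Complex.exp ζ :=
    Complex.exp_antiperiodic ζ
  have hconst := sub_eq_sub_of_exp_eq_exp
    (u := fun p : ℂ × ℂ => l (p.1 + Complex.exp p.2, p.2 + Real.pi * Complex.I)) (v := l)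
    (by fun_prop) hcont
    (fun p => by
      rw [hl.exp_eq, hl.exp_eq, exp_add_pi, add_neg_cancel_right, div_neg, ← neg_div, neg_sub])
    (z, ζ) (z + Complex.exp ζ, ζ + Real.pi * Complex.I)
  have htwice : ζ + Real.pi * Complex.I + Real.pi * Complex.I
      = ζ + 2 * Real.pi * Complex.I := by ring
  simp only [exp_add_pi, add_neg_cancel_right, htwice, hl.periodic hG z ζ] at hconst
  linear_combination hconst / 2

end IsSecantLog

/- If `G` exchanged `x` and `G x`, the logarithm of `G z - z` would change from `x` to `G x` by the
secant logarithm of `{x, G x}`, which does not depend on the order of the end points. -/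
theorem BoundedDisplacement.apply_apply_ne {G : ℂ ≃ₜ ℂ} (hG : BoundedDisplacement G)
    (hfix : ∀ z, G z ≠ z) (x : ℂ) : G (G x) ≠ x := by
  intro hx
  have hGc := G.continuous
  obtain ⟨l, hl⟩ := exists_isSecantLog G
  have hlc := hl.continuous
  obtain ⟨μ, hμ, hexp⟩ := exists_continuous_exp_eq (v := fun z => G z - z) (by fun_prop)
    (fun z => sub_ne_zero.2 (hfix z))
  have hconst := sub_eq_sub_of_exp_eq_exp (u := fun z => l (z, μ z))
    (v := fun z => μ (G z) - μ z) (by fun_prop) (by fun_prop)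
    (fun z => by rw [hl.exp_eq, Complex.exp_sub, hexp, hexp, add_sub_cancel]) x (G x)
  obtain ⟨n, hn⟩ : ∃ n : ℤ, μ (G x) = μ x + Real.pi * Complex.I + n * (2 * Real.pi * Complex.I) :=
    Complex.exp_eq_exp_iff_exists_int.1 (by
      rw [Complex.exp_antiperiodic, hexp, hexp, hx, neg_sub])
  have hsecant : l (G x, μ (G x)) = l (x, μ x) := by
    rw [hn]
    refine ((hl.periodic hG (G x)).int_mul n _).trans ?_
    rw [← hl.swap hG x (μ x), hexp, add_sub_cancel]
  rw [hsecant, hx] at hconst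
  have hμ_eq : μ (G x) = μ x := by linear_combination (-1 / 2) * hconst
  have hdisp : x - G x = G x - x := by rw [← hexp x, ← hμ_eq, hexp, hx]
  exact hfix x (by linear_combination (-1 / 2) * hdisp)

/-! ### Moving points inside connected open sets -/

section Push

variable {E : Type*} [NormedAddCommGroup E]

theorem abs_max_zero_one_sub_norm_div_sub_le (u v : E) {ρ : ℝ} (hρ : 0 < ρ) :
    |max 0 (1 - ‖u‖ / ρ) - max 0 (1 - ‖v‖ / ρ)| ≤ ‖u - v‖ / ρ :=
  calc |max 0 (1 - ‖u‖ / ρ) - max 0 (1 - ‖v‖ / ρ)|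
      ≤ |(1 - ‖u‖ / ρ) - (1 - ‖v‖ / ρ)| := by
        rw [max_comm 0, max_comm 0]
        exact abs_max_sub_max_le_abs _ _ _
    _ = |‖v‖ - ‖u‖| / ρ := by rw [← abs_of_pos hρ, ← abs_div, abs_of_pos hρ]; ring_nf
    _ ≤ ‖u - v‖ / ρ := by
        gcongr
        rw [norm_sub_rev]
        exact abs_norm_sub_norm_le _ _

variable [NormedSpace ℝ E]

theorem exists_boundedDisplacement_push [CompleteSpace E] (c b : E) {ρ : ℝ}
    (hb : b ∈ Metric.ball c ρ) :
    ∃ φ : E ≃ₜ E, BoundedDisplacement φ ∧ (∀ z ∉ Metric.ball c ρ, φ z = z) ∧ φ c = b := by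
  rw [mem_ball_iff_norm] at hb
  have hρ : 0 < ρ := (norm_nonneg _).trans_lt hb
  let β (z : E) : ℝ := max 0 (1 - ‖z - c‖ / ρ)
  let push (z : E) : E := z + β z • (b - c)
  let k : NNReal := ⟨‖b - c‖ / ρ, by positivity⟩
  have hk : k < 1 := (div_lt_one hρ).2 hb
  have happrox : ApproximatesLinearOn push
      (ContinuousLinearEquiv.refl ℝ E : E →L[ℝ] E) Set.univ k := fun x _ y _ =>
    calc ‖push x - push y - (x - y)‖ = ‖(β x - β y) • (b - c)‖ := by
          simp only [push]; congr 1; module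
      _ = |β x - β y| * ‖b - c‖ := by rw [norm_smul, Real.norm_eq_abs]
      _ ≤ ‖x - y‖ / ρ * ‖b - c‖ := by
          gcongr
          simpa using abs_max_zero_one_sub_norm_div_sub_le (x - c) (y - c) hρ
      _ = ‖b - c‖ / ρ * ‖x - y‖ := by ring
  have hcontract : Subsingleton E ∨
      k < ‖((ContinuousLinearEquiv.refl ℝ E).symm : E →L[ℝ] E)‖₊⁻¹ := by
    rcases subsingleton_or_nontrivial E with hE | hE
    · exact .inl hE
    · refine .inr ?_
      have hnorm : ‖((ContinuousLinearEquiv.refl ℝ E).symm : E →L[ℝ] E)‖₊ = 1 :=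
        ContinuousLinearMap.nnnorm_id
      rwa [hnorm, inv_one]
  refine ⟨happrox.toHomeomorph push hcontract, ⟨‖b - c‖, fun z => ?_⟩, fun z hz => ?_, ?_⟩
  · change ‖z + β z • (b - c) - z‖ ≤ ‖b - c‖
    have hβ : β z ≤ 1 := max_le zero_le_one (sub_le_self _ (by positivity))
    rw [add_sub_cancel_left, norm_smul, Real.norm_of_nonneg (le_max_left _ _)]
    exact mul_le_of_le_one_left (norm_nonneg _) hβ
  · change z + β z • (b - c) = z
    rw [mem_ball_iff_norm, not_lt] at hz
    have hβ : β z = 0 := max_eq_left (by linarith [(one_le_div hρ).2 hz])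
    simp [hβ]
  · change c + β c • (b - c) = b
    simp [β]

theorem exists_boundedDisplacement_move [CompleteSpace E] {U : Set E} (hU : IsOpen U)
    (hconn : IsPreconnected U) {a b : E} (ha : a ∈ U) (hb : b ∈ U) :
    ∃ φ : E ≃ₜ E, BoundedDisplacement φ ∧ (∀ z ∉ U, φ z = z) ∧ φ a = b := by
  refine hconn.induction₂
    (fun a b => ∃ φ : E ≃ₜ E, BoundedDisplacement φ ∧ (∀ z ∉ U, φ z = z) ∧ φ a = b)
    ?_ ?_ ?_ ha hb
  · intro x hx
    obtain ⟨ρ, hρ, hball⟩ := Metric.isOpen_iff.1 hU x hx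
    filter_upwards [mem_nhdsWithin_of_mem_nhds (Metric.ball_mem_nhds x hρ)] with y hy
    obtain ⟨φ, hφ, hid, hxy⟩ := exists_boundedDisplacement_push x y hy
    exact ⟨φ, hφ, fun z hz => hid z (mt (@hball z) hz), hxy⟩
  · rintro x y z _ _ _ ⟨φ, hφ, hφid, hxy⟩ ⟨ψ, hψ, hψid, hyz⟩
    exact ⟨φ.trans ψ, hφ.trans hψ, fun w hw => by simp [hφid w hw, hψid w hw],
      by simp [hxy, hyz]⟩
  · rintro x y _ _ ⟨φ, hφ, hid, hxy⟩
    exact ⟨φ.symm, hφ.symm, fun w hw => φ.symm_apply_eq.2 (hid w hw).symm,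
      φ.symm_apply_eq.2 hxy.symm⟩

end Push

/-! ### Brouwer's lemma on free sets -/

/-- `U` is free for the map `G`: it is disjoint from its image. -/
def IsFree {X : Type*} (G : X → X) (U : Set X) : Prop := ∀ ⦃y⦄, y ∈ U → G y ∉ U

namespace IsFree

variable {X : Type*} {G φ : X → X} {U : Set X} {y : X}

theorem comp_apply_ne (hU : IsFree G U) (hfix : ∀ z, G z ≠ z) (hφ : Function.Injective φ)
    (hid : ∀ z ∉ U, φ z = z) (z : X) : φ (G z) ≠ z := by
  intro h
  by_cases hz : G z ∈ U
  · have hzU : z ∉ U := fun hzU => hU hzU hz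
    exact hfix z (hφ (h.trans (hid z hzU).symm))
  · exact hfix z ((hid _ hz).symm.trans h)

variable [TopologicalSpace X]

theorem apply_notMem_of_mem_closure (h : IsFree G U) (hU : IsOpen U) (hG : Continuous G)
    (hy : y ∈ closure U) : G y ∉ U :=
  closure_minimal (fun _ hz => h hz) (hU.preimage hG).isClosed_compl hy

theorem apply_notMem_closure (h : IsFree G U) (hU : IsOpen U) (hG : IsOpenMap G)
    (hy : y ∈ U) : G y ∉ closure U := by
  have hdisj : Disjoint (G '' U) (closure U) :=
    (Set.disjoint_left.2 (Set.forall_mem_image.2 h)).closure_right (hG U hU)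
  exact Set.disjoint_left.1 hdisj (Set.mem_image_of_mem G hy)

end IsFree

theorem exists_isOpen_isPreconnected_isFree {X : Type*} [TopologicalSpace X] [T2Space X]
    [LocallyConnectedSpace X] {G : X → X} (hG : Continuous G) {γ W : Set X}
    (hγ : IsCompact γ) (hconn : IsConnected γ) (hfree : IsFree G γ) (hW : IsOpen W)
    (hγW : γ ⊆ W) :
    ∃ U, IsOpen U ∧ IsPreconnected U ∧ γ ⊆ U ∧ U ⊆ W ∧ IsFree G U := by
  obtain ⟨x, hx⟩ := hconn.nonempty
  obtain ⟨V, V', hV, hV', hγV, hGγV', hdisj⟩ := SeparatedNhds.of_isCompact_isCompact hγ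
    (hγ.image hG) (Set.disjoint_right.2 (Set.forall_mem_image.2 hfree))
  have hO : IsOpen (V ∩ G ⁻¹' V' ∩ W) := (hV.inter (hV'.preimage hG)).inter hW
  have hsub := connectedComponentIn_subset (V ∩ G ⁻¹' V' ∩ W) x
  exact ⟨connectedComponentIn (V ∩ G ⁻¹' V' ∩ W) x, hO.connectedComponentIn,
    isPreconnected_connectedComponentIn,
    hconn.isPreconnected.subset_connectedComponentIn hx
      fun p hp => ⟨⟨hγV hp, hGγV' ⟨p, hp, rfl⟩⟩, hγW hp⟩,
    fun p hp => (hsub hp).2,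
    fun p hp hGp => Set.disjoint_left.1 hdisj (hsub hGp).1.1 (hsub hp).1.2⟩

theorem iterate_comp_eq_of_forall_notMem {X : Type*} {G φ : X → X} {U : Set X}
    (hid : ∀ z ∉ U, φ z = z) {y : X} {m : ℕ} (hy : ∀ i < m, G^[i + 1] y ∉ U) :
    (φ ∘ G)^[m + 1] y = φ (G^[m + 1] y) := by
  induction m with
  | zero => rfl
  | succ m ih =>
    rw [Function.iterate_succ_apply', ih fun i hi => hy i (by omega), hid _ (hy m (by omega)),
      Function.iterate_succ_apply' G (m + 1), Function.comp_apply]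

/-- No fixed point free homeomorphism of `E` with bounded displacement has a point of period
`i` for `1 ≤ i ≤ n`; this is the statement proved by induction on `n` in Brouwer's lemma. -/
def NoPeriodicPtLE (E : Type*) [NormedAddCommGroup E] (n : ℕ) : Prop :=
  ∀ G : E ≃ₜ E, BoundedDisplacement G → (∀ z, G z ≠ z) →
    ∀ x, ∀ i, 1 ≤ i → i ≤ n → G^[i] x ≠ x

section FreeSets

variable {E : Type*} [NormedAddCommGroup E] [NormedSpace ℝ E] [CompleteSpace E] {n : ℕ}
  {G : E ≃ₜ E}

/- A first return of `y ∈ U` to `U` becomes a periodic orbit after composing with a homeomorphism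
supported in `U` which closes it up, and this creates no fixed point because `U` is free. -/
theorem IsFree.iterate (hE : NoPeriodicPtLE E n) (hG : BoundedDisplacement G)
    (hfix : ∀ z, G z ≠ z) {U : Set E} (hU : IsOpen U) (hconn : IsPreconnected U)
    (hfree : IsFree G U) {m : ℕ} (hm : 1 ≤ m) (hmn : m ≤ n) : IsFree G^[m] U := by
  induction m using Nat.strong_induction_on with
  | _ m ih =>
    intro y hy hmy
    obtain ⟨k, rfl⟩ := Nat.exists_eq_add_of_le' hm
    obtain ⟨φ, hφ, hid, hclose⟩ := exists_boundedDisplacement_move hU hconn hmy hy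
    refine hE (G.trans φ) (hG.trans hφ) (hfree.comp_apply_ne hfix φ.injective hid) y
      (k + 1) hm hmn ?_
    change (φ ∘ G)^[k + 1] y = y
    rw [iterate_comp_eq_of_forall_notMem hid fun i hi =>
      ih (i + 1) (by omega) (by omega) (by omega) hy, hclose]

/- Otherwise, moving `x` inside `U` to a point of `U ∩ D` makes `D` return to itself along the orbit
of `x` while staying free. -/
theorem disjoint_of_isFree_of_iterate_eq (hE : NoPeriodicPtLE E n) (hn : 1 ≤ n)
    (hG : BoundedDisplacement G) (hfix : ∀ z, G z ≠ z) {x : E} (hx : G^[n + 1] x = x)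
    {U D : Set E} (hU : IsOpen U) (hUconn : IsPreconnected U) (hUfree : IsFree G U)
    (hxU : x ∈ U) (horbit : ∀ i, 2 ≤ i → i ≤ n → G^[i] x ∉ U)
    (hD : IsOpen D) (hDconn : IsPreconnected D) (hDfree : IsFree G D) (hxD : G x ∈ D)
    (hDU : Disjoint (G '' D) U) : Disjoint U D := by
  refine Set.disjoint_left.2 fun p hpU hpD => ?_
  obtain ⟨φ, hφ, hid, hxp⟩ := exists_boundedDisplacement_move hU hUconn hxU hpU
  have hDfree' : IsFree (G.trans φ) D := fun y hy => by
    rw [Homeomorph.trans_apply, hid _ (Set.disjoint_left.1 hDU ⟨y, hy, rfl⟩)]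
    exact hDfree hy
  obtain ⟨k, rfl⟩ := Nat.exists_eq_add_of_le' hn
  refine hDfree'.iterate hE (hG.trans hφ) (hUfree.comp_apply_ne hfix φ.injective hid) hD hDconn
    hn le_rfl hxD ?_
  change (φ ∘ G)^[k + 1] (G x) ∈ D
  rwa [iterate_comp_eq_of_forall_notMem hid fun i hi =>
    horbit (i + 1 + 1) (by omega) (by omega), ← Function.iterate_succ_apply, hx, hxp]

end FreeSets

section CriticalArc

variable {E : Type*} [NormedAddCommGroup E] {G : E ≃ₜ E}

/-- `R` is the radius at which a growing ball around `x` first meets its image under `G`, the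
contact being at the image of the point `z`. -/
structure IsCriticalRadius (G : E ≃ₜ E) (x z : E) (R : ℝ) : Prop where
  pos : 0 < R
  dist_le : dist z x ≤ R
  dist_apply_le : dist (G z) x ≤ R
  isFree : IsFree G (Metric.ball x R)

theorem exists_isCriticalRadius [ProperSpace E] (hfix : ∀ z, G z ≠ z) (x : E) :
    ∃ z R, IsCriticalRadius G x z R := by
  have hG := G.continuous
  obtain ⟨z, hz⟩ := Continuous.exists_forall_le (f := fun z => max (dist z x) (dist (G z) x))
    (by fun_prop)
    (tendsto_atTop_mono (fun _ => le_max_left _ _) (tendsto_dist_right_cocompact_atTop x))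
  refine ⟨z, max (dist z x) (dist (G z) x), ?_, le_max_left _ _, le_max_right _ _,
    fun y hy hGy => (hz y).not_gt (max_lt hy hGy)⟩
  by_contra! hR
  have hz : z = x := dist_le_zero.1 ((le_max_left _ _).trans hR)
  have hGz : G z = x := dist_le_zero.1 ((le_max_right _ _).trans hR)
  exact hfix z (hGz.trans hz.symm)

variable [NormedSpace ℝ E] {x z p q : E} {R σ τ : ℝ}

/-- The part of the segment from `x` to `p` lying beyond the parameter `τ`. -/
def radialSegment (x p : E) (τ : ℝ) : Set E := AffineMap.lineMap x p '' Set.Icc τ 1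

theorem isCompact_radialSegment : IsCompact (radialSegment x p τ) :=
  isCompact_Icc.image AffineMap.lineMap_continuous

theorem isPreconnected_radialSegment : IsPreconnected (radialSegment x p τ) :=
  isPreconnected_Icc.image _ AffineMap.lineMap_continuous.continuousOn

theorem radialSegment_antitone : Antitone (radialSegment x p) :=
  fun _ _ h => Set.image_mono (Set.Icc_subset_Icc_left h)

theorem left_mem_radialSegment : x ∈ radialSegment x p 0 := ⟨0, by simp, by simp⟩

theorem lineMap_mem_radialSegment (hτ : τ ≤ 1) :
    AffineMap.lineMap x p τ ∈ radialSegment x p τ := ⟨τ, ⟨le_rfl, hτ⟩, rfl⟩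

theorem right_mem_radialSegment (hτ : τ ≤ 1) : p ∈ radialSegment x p τ :=
  ⟨1, ⟨hτ, le_rfl⟩, by simp⟩

theorem radialSegment_subset_insert_ball (hR : 0 < R) (hp : dist p x ≤ R) (hτ : 0 ≤ τ) :
    radialSegment x p τ ⊆ insert p (Metric.ball x R) := by
  rintro _ ⟨t, ⟨hτt, ht⟩, rfl⟩
  rcases ht.eq_or_lt with rfl | ht
  · exact .inl (by simp)
  · refine .inr ?_
    rw [Metric.mem_ball, dist_lineMap_left, Real.norm_of_nonneg (hτ.trans hτt), dist_comm x p]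
    exact (mul_le_mul_of_nonneg_left hp (hτ.trans hτt)).trans_lt (mul_lt_of_lt_one_left hR ht)

theorem disjoint_radialSegment (hpq : p ≠ q) (hdist : dist p x = dist q x) (hσ : 0 ≤ σ)
    (hτ : 0 < τ) : Disjoint (radialSegment x p σ) (radialSegment x q τ) := by
  rw [Set.disjoint_left]
  rintro _ ⟨s, hs, rfl⟩ ⟨t, ht, hst⟩
  have ht0 : 0 < t := hτ.trans_le ht.1
  have hqx : dist x q ≠ 0 := fun h0 => hpq <| by
    rw [dist_comm, dist_comm q, h0, dist_eq_zero] at hdist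
    rw [← hdist, ← dist_eq_zero.1 h0]
  have heq : t = s := by
    have := congrArg (dist · x) hst
    simp only [dist_lineMap_left, Real.norm_of_nonneg ht0.le,
      Real.norm_of_nonneg (hσ.trans hs.1), dist_comm x p, hdist, dist_comm q x] at this
    exact mul_right_cancel₀ hqx this
  subst heq
  rw [AffineMap.lineMap_apply, AffineMap.lineMap_apply, vadd_right_cancel_iff,
    smul_right_inj ht0.ne', vsub_left_cancel_iff] at hst
  exact hpq hst.symm

/-- The arc made of the segment from `x` to `G z` followed by the image under `G` of the segment
from `z` back to the point of parameter `τ` on `[x, z]`. For `τ → 0` its end points are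
`x` and (nearly) `G x`. -/
def criticalArc (G : E ≃ₜ E) (x z : E) (τ : ℝ) : Set E :=
  radialSegment x (G z) 0 ∪ G '' radialSegment x z τ

theorem isCompact_criticalArc : IsCompact (criticalArc G x z τ) :=
  isCompact_radialSegment.union (isCompact_radialSegment.image G.continuous)

theorem left_mem_criticalArc : x ∈ criticalArc G x z τ := .inl left_mem_radialSegment

theorem isConnected_criticalArc (hτ : τ ≤ 1) : IsConnected (criticalArc G x z τ) :=
  ⟨⟨x, left_mem_criticalArc⟩, isPreconnected_radialSegment.union (G z)
    (right_mem_radialSegment zero_le_one) ⟨z, right_mem_radialSegment hτ, rfl⟩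
    (isPreconnected_radialSegment.image _ G.continuous.continuousOn)⟩

theorem criticalArc_antitone : Antitone (criticalArc G x z) :=
  fun _ _ h => Set.union_subset_union_right _ (Set.image_mono (radialSegment_antitone h))

namespace IsCriticalRadius

theorem mem_closure (h : IsCriticalRadius G x z R) : z ∈ closure (Metric.ball x R) := by
  rw [closure_ball x h.pos.ne']; exact h.dist_le

theorem apply_mem_closure (h : IsCriticalRadius G x z R) :
    G z ∈ closure (Metric.ball x R) := by
  rw [closure_ball x h.pos.ne']; exact h.dist_apply_le

theorem notMem_ball (h : IsCriticalRadius G x z R) : z ∉ Metric.ball x R := fun hz =>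
  h.isFree.apply_notMem_closure Metric.isOpen_ball G.isOpenMap hz h.apply_mem_closure

theorem apply_notMem_ball (h : IsCriticalRadius G x z R) : G z ∉ Metric.ball x R :=
  h.isFree.apply_notMem_of_mem_closure Metric.isOpen_ball G.continuous h.mem_closure

theorem dist_apply_eq_dist (h : IsCriticalRadius G x z R) : dist (G z) x = dist z x :=
  (h.dist_apply_le.antisymm (not_lt.1 h.apply_notMem_ball)).trans
    (h.dist_le.antisymm (not_lt.1 h.notMem_ball)).symm

theorem mem_insert_of_mem_left (h : IsCriticalRadius G x z R)
    (hp : p ∈ radialSegment x (G z) 0) : p ∈ insert (G z) (Metric.ball x R) :=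
  radialSegment_subset_insert_ball h.pos h.dist_apply_le le_rfl hp

theorem mem_insert_of_mem_right (h : IsCriticalRadius G x z R) (hτ : 0 ≤ τ)
    (hp : p ∈ radialSegment x z τ) : p ∈ insert z (Metric.ball x R) :=
  radialSegment_subset_insert_ball h.pos h.dist_le hτ hp

theorem insert_subset_closure (h : IsCriticalRadius G x z R) :
    insert z (Metric.ball x R) ⊆ closure (Metric.ball x R) :=
  Set.insert_subset h.mem_closure subset_closure

theorem insert_apply_subset_closure (h : IsCriticalRadius G x z R) :
    insert (G z) (Metric.ball x R) ⊆ closure (Metric.ball x R) :=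
  Set.insert_subset h.apply_mem_closure subset_closure

theorem apply_apply_notMem (h : IsCriticalRadius G x z R) (hfix : ∀ z, G z ≠ z)
    (hfree : IsFree (G ∘ G) (Metric.ball x R)) :
    G (G z) ∉ insert (G z) (Metric.ball x R) := by
  rintro (hz | hz)
  · exact hfix _ hz
  · exact hfree.apply_notMem_of_mem_closure Metric.isOpen_ball
      (G.continuous.comp G.continuous) h.mem_closure hz

/- The four pairs of pieces of the arc and of its image are disjoint because `G` and `G ∘ G` map
the open ball off the closed one, except at the contact points `z` and `G z`. -/
theorem isFree_criticalArc (h : IsCriticalRadius G x z R) (hfix : ∀ z, G z ≠ z)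
    (hfree : IsFree (G ∘ G) (Metric.ball x R)) (hτ : 0 < τ) :
    IsFree G (criticalArc G x z τ) := by
  have apply_notMem {y} (hy : y ∈ Metric.ball x R) : G y ∉ closure (Metric.ball x R) :=
    h.isFree.apply_notMem_closure Metric.isOpen_ball G.isOpenMap hy
  have comp_notMem {y} (hy : y ∈ Metric.ball x R) : G (G y) ∉ closure (Metric.ball x R) :=
    hfree.apply_notMem_closure Metric.isOpen_ball (G.isOpenMap.comp G.isOpenMap) hy
  have hdisj : Disjoint (radialSegment x (G z) 0) (radialSegment x z τ) :=
    disjoint_radialSegment (hfix z) h.dist_apply_eq_dist le_rfl hτ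
  rintro _ (hy | ⟨q, hq, rfl⟩) (hy' | ⟨q', hq', heq⟩)
  · have hmem := h.mem_insert_of_mem_left hy'
    rcases h.mem_insert_of_mem_left hy with rfl | hball
    · exact h.apply_apply_notMem hfix hfree hmem
    · exact apply_notMem hball (h.insert_apply_subset_closure hmem)
  · exact Set.disjoint_left.1 hdisj hy (G.injective heq ▸ hq')
  · have hmem := h.mem_insert_of_mem_left hy'
    rcases h.mem_insert_of_mem_right hτ.le hq with rfl | hball
    · exact h.apply_apply_notMem hfix hfree hmem
    · exact comp_notMem hball (h.insert_apply_subset_closure hmem)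
  · have hmem := h.mem_insert_of_mem_right hτ.le (G.injective heq ▸ hq')
    rcases h.mem_insert_of_mem_right hτ.le hq with rfl | hball
    · exact hmem.elim (hfix _) h.apply_notMem_ball
    · exact apply_notMem hball (h.insert_subset_closure hmem)

theorem iterate_notMem_criticalArc (h : IsCriticalRadius G x z R) {n : ℕ}
    (hfree : ∀ i, 1 ≤ i → i ≤ n → IsFree G^[i] (Metric.ball x R)) {i : ℕ} (hi : 2 ≤ i)
    (hin : i ≤ n) : G^[i] x ∉ criticalArc G x z 0 := by
  have hopen (k : ℕ) : IsOpenMap G^[k] := by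
    induction k with
    | zero => exact IsOpenMap.id
    | succ k ih => exact ih.comp G.isOpenMap
  have hx : x ∈ Metric.ball x R := Metric.mem_ball_self h.pos
  obtain ⟨k, rfl⟩ := Nat.exists_eq_add_of_le' (Nat.one_le_of_lt hi)
  have hk : G^[k] x ∉ closure (Metric.ball x R) :=
    (hfree k (by omega) (by omega)).apply_notMem_closure Metric.isOpen_ball (hopen k) hx
  rw [Function.iterate_succ_apply']
  rintro (hmem | ⟨q, hq, heq⟩)
  · rcases h.mem_insert_of_mem_left hmem with heq | hball
    · exact hk (G.injective heq ▸ h.mem_closure)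
    · rw [← Function.iterate_succ_apply' G] at hball
      exact hfree (k + 1) (by omega) hin hx hball
  · exact hk (G.injective heq ▸ h.insert_subset_closure (h.mem_insert_of_mem_right le_rfl hq))

end IsCriticalRadius

end CriticalArc

/- The ball of radius `η` around `G x` and the free neighbourhood `U` of the critical arc, truncated
inside that ball, meet although they avoid the rest of the orbit of `x`; this contradicts
`disjoint_of_isFree_of_iterate_eq`. -/
theorem NoPeriodicPtLE.succ {E : Type*} [NormedAddCommGroup E] [NormedSpace ℝ E] [ProperSpace E]
    {n : ℕ} (hE : NoPeriodicPtLE E n) (hn : 2 ≤ n) : NoPeriodicPtLE E (n + 1) := by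
  intro G hG hfix x i hi hin hper
  obtain hin | rfl := Nat.le_succ_iff.1 hin
  · exact hE G hG hfix x i hi hin hper
  obtain ⟨z, R, hR⟩ := exists_isCriticalRadius hfix x
  have hret (i : ℕ) (hi : 1 ≤ i) (hin : i ≤ n) : IsFree G^[i] (Metric.ball x R) :=
    hR.isFree.iterate hE hG hfix Metric.isOpen_ball (convex_ball x R).isPreconnected hi hin
  let orbit : Set E := (G^[·] x) '' Set.Icc 2 n
  have horbit : Disjoint (criticalArc G x z 0) orbit := by
    refine Set.disjoint_right.2 (Set.forall_mem_image.2 fun i hi => ?_)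
    exact hR.iterate_notMem_criticalArc hret hi.1 hi.2
  obtain ⟨W, W', hW, hW', hWarc, hW'orbit, hWW'⟩ := SeparatedNhds.of_isCompact_isCompact
    isCompact_criticalArc ((Set.finite_Icc 2 n).image _).isCompact horbit
  have hGx : G x ∈ W ∩ G ⁻¹' W' :=
    ⟨hWarc (.inr ⟨x, left_mem_radialSegment, rfl⟩), hW'orbit ⟨2, ⟨le_rfl, hn⟩, rfl⟩⟩
  obtain ⟨η, hη, hD⟩ := Metric.isOpen_iff.1 (hW.inter (hW'.preimage G.continuous)) _ hGx
  obtain ⟨τ, ⟨hτ0, hτ1⟩, hτD⟩ : ∃ τ ∈ Set.Ioo (0 : ℝ) 1,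
      G (AffineMap.lineMap x z τ) ∈ Metric.ball (G x) η := by
    have hlim : Tendsto (fun τ : ℝ => G (AffineMap.lineMap x z τ)) (𝓝[>] 0) (𝓝 (G x)) :=
      ((G.continuous.comp AffineMap.lineMap_continuous).tendsto' 0 (G x)
        (by simp)).mono_left nhdsWithin_le_nhds
    exact (Filter.Eventually.and (Ioo_mem_nhdsGT zero_lt_one)
      (hlim.eventually (Metric.ball_mem_nhds _ hη))).exists
  obtain ⟨U, hU, hUconn, harcU, hUW, hUfree⟩ := exists_isOpen_isPreconnected_isFree
    G.continuous isCompact_criticalArc (isConnected_criticalArc hτ1.le)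
    (hR.isFree_criticalArc hfix (hret 2 one_le_two hn) hτ0) hW
    ((criticalArc_antitone hτ0.le).trans hWarc)
  refine Set.disjoint_left.1 (disjoint_of_isFree_of_iterate_eq hE (one_le_two.trans hn) hG hfix
    hper hU hUconn hUfree (harcU left_mem_criticalArc) ?_ Metric.isOpen_ball
    (convex_ball (G x) η).isPreconnected ?_ (Metric.mem_ball_self hη) ?_)
    (harcU (.inr ⟨_, lineMap_mem_radialSegment hτ1.le, rfl⟩)) hτD
  · exact fun i h2i hin hi => Set.disjoint_left.1 hWW' (hUW hi) (hW'orbit ⟨i, ⟨h2i, hin⟩, rfl⟩)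
  · exact fun y hy hGy => Set.disjoint_left.1 hWW' (hD hGy).1 (hD hy).2
  · exact Set.disjoint_left.2 (Set.forall_mem_image.2 fun y hy hGy =>
      Set.disjoint_left.1 hWW' (hUW hGy) (hD hy).2)

theorem noPeriodicPtLE_complex (n : ℕ) : NoPeriodicPtLE ℂ n := by
  have htwo : NoPeriodicPtLE ℂ 2 := by
    intro G hG hfix x i hi hi2
    interval_cases i
    exacts [hfix x, hG.apply_apply_ne hfix x]
  rcases le_total 2 n with hn | hn
  · induction n, hn using Nat.le_induction with
    | base => exact htwo
    | succ n hn ih => exact ih.succ hn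
  · exact fun G hG hfix x i hi hin => htwo G hG hfix x i hi (hin.trans hn)

theorem NoPeriodicPtLE.congr {E F : Type*} [NormedAddCommGroup E] [NormedSpace ℝ E]
    [NormedAddCommGroup F] [NormedSpace ℝ F] (L : E ≃L[ℝ] F) {n : ℕ} (hF : NoPeriodicPtLE F n) :
    NoPeriodicPtLE E n := by
  rintro G ⟨C, hC⟩ hfix x i hi hin hper
  let K : F ≃ₜ F := (L.symm.toHomeomorph.trans G).trans L.toHomeomorph
  have hK (y : F) : K y = L (G (L.symm y)) := rfl
  have hsemi : Function.Semiconj L G K := fun y => by rw [hK, L.symm_apply_apply]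
  refine hF K ⟨‖(L : E →L[ℝ] F)‖ * C, fun y => ?_⟩ (fun y hy => ?_) (L x) i hi hin ?_
  · calc ‖K y - y‖ = ‖L (G (L.symm y) - L.symm y)‖ := by
          rw [hK, map_sub, L.apply_symm_apply]
      _ ≤ _ := (L : E →L[ℝ] F).le_opNorm_of_le (hC _)
  · exact hfix (L.symm y) (L.eq_symm_apply.2 hy)
  · rw [← (hsemi.iterate_right i).eq, hper]

theorem IsFree.iterate_of_finrank_eq_two {E : Type*} [NormedAddCommGroup E] [NormedSpace ℝ E]
    (hdim : Module.finrank ℝ E = 2) {G : E ≃ₜ E} (hG : BoundedDisplacement G)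
    (hfix : ∀ z, G z ≠ z) {U : Set E} (hU : IsOpen U) (hconn : IsPreconnected U)
    (hfree : IsFree G U) {m : ℕ} (hm : 1 ≤ m) : IsFree G^[m] U := by
  have : FiniteDimensional ℝ E := Module.finite_of_finrank_eq_succ hdim
  have : CompleteSpace E := FiniteDimensional.complete ℝ E
  have hE : NoPeriodicPtLE E m := (noPeriodicPtLE_complex m).congr
    (ContinuousLinearEquiv.ofFinrankEq (hdim.trans Complex.finrank_real_complex.symm))
  exact hfree.iterate hE hG hfix hU hconn hm le_rfl

/-! ### The covering ℝ² → 𝕋² -/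

theorem pr2_add (a b : R2) : pr2 (a + b) = pr2 a + pr2 b := by
  simp [pr2]

theorem pr2_sub (a b : R2) : pr2 (a - b) = pr2 a - pr2 b := by
  simp [pr2]

theorem intVec_zero : intVec 0 = 0 := by
  simp [intVec]

theorem intVec_add (v w : ℤ × ℤ) : intVec (v + w) = intVec v + intVec w := by
  simp [intVec]

theorem intVec_neg (v : ℤ × ℤ) : intVec (-v) = -intVec v := by
  simp [intVec]

theorem intVec_eq_zero_of_norm_lt_one {v : ℤ × ℤ} (hv : ‖intVec v‖ < 1) : intVec v = 0 := by
  have h₁ : |(v.1 : ℝ)| < 1 := (norm_fst_le (intVec v)).trans_lt hv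
  have h₂ : |(v.2 : ℝ)| < 1 := (norm_snd_le (intVec v)).trans_lt hv
  have hv₁ : v.1 = 0 := Int.abs_lt_one_iff.1 (by exact_mod_cast h₁)
  have hv₂ : v.2 = 0 := Int.abs_lt_one_iff.1 (by exact_mod_cast h₂)
  simp [intVec, hv₁, hv₂]

theorem pr2_eq_zero_iff {a : R2} : pr2 a = 0 ↔ ∃ v, a = intVec v := by
  have h (x : ℝ) : (x : AddCircle (1 : ℝ)) = 0 ↔ ∃ n : ℤ, x = n := by
    simp only [AddCircle.coe_eq_zero_iff, zsmul_one, eq_comm (a := x)]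
  simp [pr2, Prod.ext_iff, intVec, h]

theorem pr2_intVec (v : ℤ × ℤ) : pr2 (intVec v) = 0 :=
  pr2_eq_zero_iff.2 ⟨v, rfl⟩

theorem pr2_eq_pr2_iff {a b : R2} : pr2 a = pr2 b ↔ ∃ v, a = b + intVec v := by
  rw [← sub_eq_zero, ← pr2_sub, pr2_eq_zero_iff]
  simp only [sub_eq_iff_eq_add']

theorem pr2_add_intVec (a : R2) (v : ℤ × ℤ) : pr2 (a + intVec v) = pr2 a :=
  pr2_eq_pr2_iff.2 ⟨v, rfl⟩

theorem pr2_sub_intVec (a : R2) (v : ℤ × ℤ) : pr2 (a - intVec v) = pr2 a := by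
  rw [pr2_sub, pr2_intVec, sub_zero]

theorem isOpenQuotientMap_pr2 : IsOpenQuotientMap pr2 :=
  have h : IsOpenQuotientMap (fun x : ℝ => (x : AddCircle (1 : ℝ))) :=
    QuotientAddGroup.isOpenQuotientMap_mk
  h.prodMap h

theorem continuous_pr2 : Continuous pr2 := isOpenQuotientMap_pr2.continuous

theorem surjective_pr2 : Function.Surjective pr2 := isOpenQuotientMap_pr2.surjective

theorem exists_add_intVec_mem_Icc (z : R2) : ∃ v, z + intVec v ∈ Set.Icc (0 : R2) 1 := by
  refine ⟨(-⌊z.1⌋, -⌊z.2⌋), ?_⟩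
  have h (x : ℝ) : 0 ≤ x + ((-⌊x⌋ : ℤ) : ℝ) ∧ x + ((-⌊x⌋ : ℤ) : ℝ) ≤ 1 := by
    push_cast
    exact ⟨by linarith [Int.floor_le x], by linarith [Int.lt_floor_add_one x]⟩
  exact ⟨⟨(h z.1).1, (h z.2).1⟩, ⟨(h z.1).2, (h z.2).2⟩⟩

theorem exists_eq_add_intVec_of_pr2_comp_eq {X : Type*} [TopologicalSpace X] [PreconnectedSpace X]
    [Nonempty X] {A B : X → R2} (hA : Continuous A) (hB : Continuous B)
    (hAB : ∀ x, pr2 (A x) = pr2 (B x)) : ∃ v, ∀ x, A x = B x + intVec v := by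
  obtain ⟨x₀⟩ := ‹Nonempty X›
  have hzero (x : X) : pr2 (A x - B x) = 0 := by rw [pr2_sub, hAB, sub_self]
  have hfst (x : X) : (A x - B x).1 = (A x₀ - B x₀).1 :=
    (AddCircle.isCoveringMap_coe (1 : ℝ)).const_of_comp (g := fun x => (A x - B x).1) (by fun_prop)
      (fun x y => congrArg Prod.fst ((hzero x).trans (hzero y).symm)) x x₀
  have hsnd (x : X) : (A x - B x).2 = (A x₀ - B x₀).2 :=
    (AddCircle.isCoveringMap_coe (1 : ℝ)).const_of_comp (g := fun x => (A x - B x).2) (by fun_prop)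
      (fun x y => congrArg Prod.snd ((hzero x).trans (hzero y).symm)) x x₀
  obtain ⟨v, hv⟩ := pr2_eq_zero_iff.1 (hzero x₀)
  exact ⟨v, fun x => by rw [← hv, ← Prod.ext (hfst x) (hsnd x)]; abel⟩

/-! ### Periodic and equivariant maps of the plane -/

/-- Invariance under the integer translations of the plane. -/
def IntPeriodic {α : Type*} (u : R2 → α) : Prop :=
  ∀ z v, u (z + intVec v) = u z

theorem IntPeriodic.exists_norm_le {E : Type*} [NormedAddCommGroup E] {u : R2 → E}
    (hu : IntPeriodic u) (hcont : Continuous u) : ∃ C, 0 ≤ C ∧ ∀ z, ‖u z‖ ≤ C := by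
  obtain ⟨C, hC⟩ := (isCompact_Icc (a := (0 : R2)) (b := 1)).exists_bound_of_continuousOn
    hcont.continuousOn
  have hbound (z : R2) : ‖u z‖ ≤ C := by
    obtain ⟨v, hv⟩ := exists_add_intVec_mem_Icc z
    exact hu z v ▸ hC _ hv
  exact ⟨C, (norm_nonneg _).trans (hbound 0), hbound⟩

namespace Equivariant

variable {P Q : R2 → R2}

theorem sub_self (hP : Equivariant P) : IntPeriodic fun z => P z - z := fun z v => by
  simp only [hP z v, add_sub_add_right_eq_sub]

theorem exists_norm_sub_self_le (hP : Equivariant P) (hcont : Continuous P) :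
    ∃ C, 0 ≤ C ∧ ∀ z, ‖P z - z‖ ≤ C :=
  hP.sub_self.exists_norm_le (hcont.sub continuous_id)

theorem exists_isLift (hP : Equivariant P) (hcont : Continuous P) :
    ∃ p : C(T2, T2), IsLift P p := by
  let p : T2 → T2 := fun x => pr2 (P (Function.surjInv surjective_pr2 x))
  have hp : p ∘ pr2 = pr2 ∘ P := funext fun z => by
    obtain ⟨v, hv⟩ := pr2_eq_pr2_iff.1 (Function.surjInv_eq surjective_pr2 (pr2 z))
    simp only [p, Function.comp_apply, hv, hP z v, pr2_add_intVec]
  refine ⟨⟨p, ?_⟩, fun z => (congrFun hp z).symm⟩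
  rw [isOpenQuotientMap_pr2.isQuotientMap.continuous_iff, hp]
  exact continuous_pr2.comp hcont

theorem comp (hP : Equivariant P) (hQ : Equivariant Q) : Equivariant (P ∘ Q) := fun z v => by
  simp only [Function.comp_apply, hQ z v, hP _ v]

theorem iterate (hP : Equivariant P) : ∀ n, Equivariant P^[n]
  | 0 => fun _ _ => rfl
  | n + 1 => (hP.iterate n).comp hP

theorem sub_intVec (hP : Equivariant P) (z : R2) (v : ℤ × ℤ) :
    P (z - intVec v) = P z - intVec v := by
  rw [eq_sub_iff_add_eq, ← hP, sub_add_cancel]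

theorem inverse (hP : Equivariant P) (hleft : Function.LeftInverse Q P)
    (hright : Function.RightInverse Q P) : Equivariant Q := fun z v =>
  hleft.injective.eq_iff.1 <| by rw [hP, hright, hright]

end Equivariant

namespace IsLift

variable {F G : R2 → R2} {f g : T2 → T2}

theorem comp (hF : IsLift F f) (hG : IsLift G g) : IsLift (F ∘ G) (f ∘ g) := fun z => by
  simp only [Function.comp_apply, hF (G z), hG z]

theorem iterate (hF : IsLift F f) : ∀ n, IsLift F^[n] f^[n]
  | 0 => fun _ => rfl
  | n + 1 => (hF.iterate n).comp hF

theorem inverse (hF : IsLift F f) (hright : Function.RightInverse G F)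
    (hg : Function.LeftInverse g f) : IsLift G g := fun z => by
  rw [← hright z, hF, hg, hright z]

end IsLift

/-! ### Lifts of volume-preserving maps -/

/-- The section of `pr2` with values in the half-open unit square. -/
def sectionT2 (x : T2) : R2 :=
  (AddCircle.measurableEquivIoc 1 0 x.1, AddCircle.measurableEquivIoc 1 0 x.2)

/-- The half-open unit square, a fundamental domain of `pr2`. -/
def unitSquare : Set R2 := Set.Ioc (0 : ℝ) (0 + 1) ×ˢ Set.Ioc (0 : ℝ) (0 + 1)

/-- The integer vector `v` with `z ∈ unitSquare + v`. -/
def squareIndex (z : R2) : ℤ × ℤ := (⌈z.1⌉ - 1, ⌈z.2⌉ - 1)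

/-- The number of lifts to `S` of a point of the torus. -/
def liftCount (S : Set R2) (x : T2) : ENNReal :=
  ∑' v : ℤ × ℤ, S.indicator 1 (sectionT2 x + intVec v)

theorem pr2_sectionT2 (x : T2) : pr2 (sectionT2 x) = x :=
  Prod.ext ((AddCircle.equivIoc 1 0).left_inv x.1) ((AddCircle.equivIoc 1 0).left_inv x.2)

theorem measurePreserving_sectionT2 :
    MeasurePreserving sectionT2 volume (volume.restrict unitSquare) := by
  have h : MeasurePreserving (fun x : AddCircle (1 : ℝ) =>
      ((AddCircle.measurableEquivIoc 1 0 x : Set.Ioc (0 : ℝ) (0 + 1)) : ℝ)) volume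
        (volume.restrict (Set.Ioc (0 : ℝ) (0 + 1))) :=
    (measurePreserving_subtype_coe measurableSet_Ioc).comp
      (AddCircle.measurePreserving_equivIoc 1 (a := 0))
  have hprod := h.prod h
  rwa [Measure.prod_restrict] at hprod

theorem measurable_squareIndex : Measurable squareIndex := by
  unfold squareIndex
  fun_prop

theorem squareIndex_add_intVec_eq_iff {z : R2} {v : ℤ × ℤ} :
    squareIndex (z + intVec v) = v ↔ z ∈ unitSquare := by
  have h (x : ℝ) (n : ℤ) : ⌈x⌉ + n - 1 = n ↔ 0 < x ∧ x ≤ 1 := by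
    rw [show ⌈x⌉ + n - 1 = n ↔ ⌈x⌉ = 1 by lia, Int.ceil_eq_iff]
    norm_num
  simp only [squareIndex, unitSquare, intVec, Set.mem_prod, Set.mem_Ioc, Prod.ext_iff,
    Prod.fst_add, Prod.snd_add, Int.ceil_add_intCast, zero_add, h]

theorem tsum_volume_unitSquare_inter {S : Set R2} (hS : MeasurableSet S) :
    ∑' v : ℤ × ℤ, volume (unitSquare ∩ (· + intVec v) ⁻¹' S) = volume S := by
  have htranslate (v : ℤ × ℤ) : volume (unitSquare ∩ (· + intVec v) ⁻¹' S)
      = volume (S ∩ squareIndex ⁻¹' {v}) := by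
    rw [← measure_preimage_add_right volume (intVec v) (S ∩ squareIndex ⁻¹' {v})]
    congr 1
    ext z
    simp only [Set.mem_inter_iff, Set.mem_preimage, Set.mem_singleton_iff,
      squareIndex_add_intVec_eq_iff, and_comm]
  simp_rw [htranslate]
  rw [← measure_iUnion, ← Set.inter_iUnion, ← Set.preimage_iUnion, Set.iUnion_of_singleton,
    Set.preimage_univ, Set.inter_univ]
  · exact fun v w hvw => ((Set.disjoint_singleton.2 hvw).preimage squareIndex).mono
      Set.inter_subset_right Set.inter_subset_right
  · exact fun v => hS.inter (measurable_squareIndex (measurableSet_singleton v))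

section LiftCount

variable {S : Set R2}

theorem measurable_liftCount (hS : MeasurableSet S) : Measurable (liftCount S) :=
  Measurable.tsum fun v =>
    (measurable_one.indicator hS).comp (measurePreserving_sectionT2.measurable.add_const (intVec v))

theorem liftCount_pr2 (z : R2) :
    liftCount S (pr2 z) = ∑' v : ℤ × ℤ, S.indicator 1 (z + intVec v) := by
  obtain ⟨w, hw⟩ := pr2_eq_pr2_iff.1 (pr2_sectionT2 (pr2 z))
  rw [← (Equiv.addLeft w).tsum_eq]
  simp only [liftCount, hw, Equiv.coe_addLeft, intVec_add, add_assoc]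

theorem lintegral_liftCount (hS : MeasurableSet S) : ∫⁻ x, liftCount S x = volume S := by
  have hmeas (v : ℤ × ℤ) : Measurable fun z : R2 => S.indicator (1 : R2 → ENNReal) (z + intVec v) :=
    (measurable_one.indicator hS).comp (measurable_add_const _)
  have hterm (v : ℤ × ℤ) : ∫⁻ x, S.indicator (1 : R2 → ENNReal) (sectionT2 x + intVec v)
      = volume (unitSquare ∩ (· + intVec v) ⁻¹' S) := by
    have hS' : MeasurableSet ((· + intVec v) ⁻¹' S) := measurable_add_const _ hS
    rw [measurePreserving_sectionT2.lintegral_comp (hmeas v), Set.inter_comm,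
      ← Measure.restrict_apply hS', ← lintegral_indicator_one hS']
    rfl
  calc ∫⁻ x, liftCount S x
      = ∑' v : ℤ × ℤ, ∫⁻ x, S.indicator (1 : R2 → ENNReal) (sectionT2 x + intVec v) :=
        lintegral_tsum fun v =>
          ((hmeas v).comp measurePreserving_sectionT2.measurable).aemeasurable
    _ = volume S := by simp_rw [hterm, tsum_volume_unitSquare_inter hS]

end LiftCount

theorem IsLift.measurePreserving {F : R2 → R2} {f : T2 → T2} (hlift : IsLift F f)
    (hF : Continuous F) (hequiv : Equivariant F) (hf : MeasurePreserving f volume volume) :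
    MeasurePreserving F volume volume := by
  refine ⟨hF.measurable, Measure.ext fun S hS => ?_⟩
  have hcount (x : T2) : liftCount (F ⁻¹' S) x = liftCount S (f x) := by
    obtain ⟨z, rfl⟩ := surjective_pr2 x
    simp only [← hlift z, liftCount_pr2, ← hequiv z]
    rfl
  rw [Measure.map_apply hF.measurable hS, ← lintegral_liftCount (hF.measurable hS),
    ← lintegral_liftCount hS, ← hf.lintegral_comp (measurable_liftCount hS)]
  exact lintegral_congr hcount

/-! ### Area and displacement -/

theorem IsFree.pairwise_disjoint_preimage_iterate {X : Type*} {G : X → X} {U : Set X}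
    (hU : ∀ ⦃m⦄, 1 ≤ m → IsFree G^[m] U) : Pairwise (Function.onFun Disjoint (G^[·] ⁻¹' U)) :=
  (pairwise_disjoint_on _).2 fun i j hij => Set.disjoint_left.2 fun y hi hj =>
    hU (Nat.sub_pos_of_lt hij) hi <| by
      rwa [← Function.iterate_add_apply, Nat.sub_add_cancel hij.le]

theorem natCast_mul_measure_le_of_measurePreserving {X : Type*} [MeasurableSpace X] {μ : Measure X}
    {G : X → X} (hG : MeasurePreserving G μ μ) {U B : Set X} (hU : MeasurableSet U)
    (hdisj : Pairwise (Function.onFun Disjoint (G^[·] ⁻¹' U))) {N : ℕ}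
    (hB : ∀ i < N, G^[i] ⁻¹' U ⊆ B) : N * μ U ≤ μ B :=
  calc N * μ U = ∑ i ∈ Finset.range N, μ (G^[i] ⁻¹' U) := by
        simp [(hG.iterate _).measure_preimage hU.nullMeasurableSet]
    _ = μ (⋃ i ∈ Finset.range N, G^[i] ⁻¹' U) :=
        (measure_biUnion_finset (hdisj.set_pairwise _)
          fun i _ => (hG.iterate i).measurable hU).symm
    _ ≤ μ B := measure_mono (Set.iUnion₂_subset fun i hi => hB i (Finset.mem_range.1 hi))

theorem isFree_ball_of_lipschitzWith {E : Type*} [SeminormedAddCommGroup E] {K : E → E} {L : NNReal}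
    (hK : LipschitzWith L K) (x : E) :
    IsFree K (Metric.ball x (‖K x - x‖ / (1 + L))) := fun z hz hKz => by
  rw [Metric.mem_ball, lt_div_iff₀ (by positivity)] at hz hKz
  have hLip := hK.dist_le_mul x z
  have htri := dist_triangle_left (K x) x (K z)
  rw [← dist_eq_norm] at hz hKz
  rw [dist_comm x z, dist_comm (K x)] at hLip
  nlinarith [mul_le_mul_of_nonneg_left hz.le L.coe_nonneg]

section Displacement

variable {E : Type*} [NormedAddCommGroup E] [NormedSpace ℝ E] {K H : E → E} {δ : E} {κ : ℝ}

theorem semiconj_iterate_apply (hHK : Function.Semiconj H K (· + δ)) (n : ℕ) (z : E) :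
    H (K^[n] z) = H z + (n : ℝ) • δ := by
  rw [(hHK.iterate_right n).eq, add_right_iterate, Nat.cast_smul_eq_nsmul]

theorem norm_iterate_sub_sub_le (hHK : Function.Semiconj H K (· + δ)) (hH : ∀ z, ‖H z - z‖ ≤ κ)
    (n : ℕ) (z : E) : ‖K^[n] z - z - (n : ℝ) • δ‖ ≤ 2 * κ := by
  have hsplit : K^[n] z - z - (n : ℝ) • δ = (H z - z) - (H (K^[n] z) - K^[n] z) := by
    rw [semiconj_iterate_apply hHK]; abel
  rw [hsplit, two_mul]
  exact (norm_sub_le _ _).trans (add_le_add (hH _) (hH _))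

theorem norm_sub_self_le_of_semiconj (hHK : Function.Semiconj H K (· + δ))
    (hH : ∀ z, ‖H z - z‖ ≤ κ) (z : E) : ‖K z - z‖ ≤ 2 * κ + ‖δ‖ := by
  have hmean := norm_iterate_sub_sub_le hHK hH 1 z
  rw [Function.iterate_one, Nat.cast_one, one_smul] at hmean
  linarith [norm_le_norm_sub_add (K z - z) δ]

theorem preimage_iterate_ball_subset (hHK : Function.Semiconj H K (· + δ))
    (hH : ∀ z, ‖H z - z‖ ≤ κ) {n : ℕ} (hn : n * ‖δ‖ ≤ 1) (x : E) (ρ : ℝ) :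
    K^[n] ⁻¹' Metric.ball x ρ ⊆ Metric.ball x (ρ + 2 * κ + 1) := fun y hy => by
  rw [Set.mem_preimage, mem_ball_iff_norm] at hy
  rw [mem_ball_iff_norm]
  have hsplit : y - x = (K^[n] y - x) - (K^[n] y - y - (n : ℝ) • δ) - (n : ℝ) • δ := by abel
  have hnδ : ‖(n : ℝ) • δ‖ ≤ 1 := by rwa [norm_smul, Real.norm_natCast]
  calc ‖y - x‖ ≤ ‖K^[n] y - x‖ + ‖K^[n] y - y - (n : ℝ) • δ‖ + ‖(n : ℝ) • δ‖ := by
        rw [hsplit]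
        exact (norm_sub_le _ _).trans (add_le_add_left (norm_sub_le _ _) _)
    _ < ρ + 2 * κ + 1 := by linarith [norm_iterate_sub_sub_le hHK hH n y]

variable [MeasurableSpace E] [BorelSpace E] {μ : Measure E} [μ.IsAddHaarMeasure]
  {K : E ≃ₜ E}

/- By Brouwer's lemma the first `⌈1 / ‖δ‖⌉` preimages of a free ball are disjoint; they have the
same area and stay in a ball of bounded radius. -/
theorem sq_radius_le_of_isFree_ball (hdim : Module.finrank ℝ E = 2) (hK : BoundedDisplacement K)
    (hμ : MeasurePreserving K μ μ) (hH : ∀ z, ‖H z - z‖ ≤ κ) (hδ : δ ≠ 0)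
    (hHK : Function.Semiconj H K (· + δ)) {x : E} {ρ : ℝ} (hρ : 0 ≤ ρ)
    (hfree : IsFree K (Metric.ball x ρ)) : ρ ^ 2 ≤ (ρ + 2 * κ + 1) ^ 2 * ‖δ‖ := by
  have : FiniteDimensional ℝ E := Module.finite_of_finrank_eq_succ hdim
  have : Nontrivial E := Module.nontrivial_of_finrank_pos (hdim ▸ two_pos)
  have hδ0 : 0 < ‖δ‖ := norm_pos_iff.2 hδ
  have hκ : 0 ≤ κ := (norm_nonneg _).trans (hH 0)
  have hfix (z : E) : K z ≠ z := fun h => hδ <| by simpa [h] using hHK.eq z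
  have hsub (i : ℕ) (hi : i < ⌈1 / ‖δ‖⌉₊) :
      K^[i] ⁻¹' Metric.ball x ρ ⊆ Metric.ball x (ρ + 2 * κ + 1) :=
    preimage_iterate_ball_subset hHK hH ((lt_div_iff₀ hδ0).1 (Nat.lt_ceil.1 hi)).le x ρ
  have harea := natCast_mul_measure_le_of_measurePreserving hμ measurableSet_ball
    (IsFree.pairwise_disjoint_preimage_iterate fun m hm => hfree.iterate_of_finrank_eq_two hdim hK
      hfix Metric.isOpen_ball (convex_ball x ρ).isPreconnected hm) hsub
  rw [Measure.addHaar_ball μ x hρ, Measure.addHaar_ball μ x (by positivity), hdim, ← mul_assoc,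
    ENNReal.mul_le_mul_iff_left (Metric.measure_ball_pos μ _ one_pos).ne' measure_ball_lt_top.ne,
    ← ENNReal.ofReal_natCast, ← ENNReal.ofReal_mul (Nat.cast_nonneg _),
    ENNReal.ofReal_le_ofReal_iff (by positivity)] at harea
  calc ρ ^ 2 = 1 / ‖δ‖ * ρ ^ 2 * ‖δ‖ := by field_simp
    _ ≤ (ρ + 2 * κ + 1) ^ 2 * ‖δ‖ := by
        gcongr
        exact (mul_le_mul_of_nonneg_right (Nat.le_ceil _) (sq_nonneg ρ)).trans harea

theorem norm_apply_sub_self_le (hdim : Module.finrank ℝ E = 2) (hμ : MeasurePreserving K μ μ)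
    (hH : ∀ z, ‖H z - z‖ ≤ κ) (hδ : δ ≠ 0) (hδ1 : ‖δ‖ ≤ 1)
    (hHK : Function.Semiconj H K (· + δ)) {L : NNReal} (hL : LipschitzWith L K) (x : E) :
    ‖K x - x‖ ≤ (1 + L) * (4 * κ + 2) * √‖δ‖ := by
  have hκ : 0 ≤ κ := (norm_nonneg _).trans (hH 0)
  have hdisp (z : E) : ‖K z - z‖ ≤ 2 * κ + 1 :=
    (norm_sub_self_le_of_semiconj hHK hH z).trans (add_le_add_right hδ1 _)
  set ρ := ‖K x - x‖ / (1 + L)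
  have hρ : ρ ≤ 2 * κ + 1 :=
    (div_le_self (norm_nonneg _) (le_add_of_nonneg_right L.coe_nonneg)).trans (hdisp x)
  have hsq : ρ ^ 2 ≤ ((4 * κ + 2) * √‖δ‖) ^ 2 :=
    calc ρ ^ 2 ≤ (ρ + 2 * κ + 1) ^ 2 * ‖δ‖ :=
          sq_radius_le_of_isFree_ball hdim ⟨_, hdisp⟩ hμ hH hδ hHK (by positivity)
            (isFree_ball_of_lipschitzWith hL x)
      _ ≤ (4 * κ + 2) ^ 2 * ‖δ‖ :=
          mul_le_mul_of_nonneg_right (pow_le_pow_left₀ (by positivity) (by linarith) 2)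
            (norm_nonneg _)
      _ = ((4 * κ + 2) * √‖δ‖) ^ 2 := by rw [mul_pow, Real.sq_sqrt (norm_nonneg _)]
  have hρ' := abs_le_of_sq_le_sq' hsq (by positivity)
  rw [mul_assoc, ← div_le_iff₀' (by positivity)]
  exact hρ'.2

end Displacement

/-! ### Rigidity of super-Liouvillean pseudo-rotations -/

theorem norm_le_enorm2 (z : R2) : ‖z‖ ≤ enorm2 z :=
  max_le (Real.abs_le_sqrt (le_add_of_nonneg_right (sq_nonneg _)))
    (Real.abs_le_sqrt (le_add_of_nonneg_left (sq_nonneg _)))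

theorem TotallyIrrationalVec.natCast_smul_sub_intVec_ne_zero {ω : R2} (hω : TotallyIrrationalVec ω)
    {n : ℕ} (hn : 1 ≤ n) (v : ℤ × ℤ) : (n : ℝ) • ω - intVec v ≠ 0 := fun h => by
  have hfst : (n : ℝ) * ω.1 - v.1 = 0 := congrArg Prod.fst h
  have hzero := (hω n 0 (-v.1) (by push_cast; linarith)).1
  lia

theorem SuperLiouville.frequently_norm_mul_pow_le_one {ω : R2} (hω : SuperLiouville ω) {B : ℝ}
    (hB : 1 < B) : ∃ᶠ n : ℕ in atTop, 1 ≤ n ∧ ∃ v, ‖(n : ℝ) • ω - intVec v‖ * B ^ n ≤ 1 := by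
  have hlogB : 0 < Real.log B := Real.log_pos hB
  refine (hω (-Real.log B)).mono fun n hn => ?_
  have hn1 : 1 ≤ n := Nat.one_le_iff_ne_zero.2 fun h => by
    rw [h, Nat.cast_zero, inv_zero, zero_mul] at hn
    linarith
  have hn0 : (0 : ℝ) < n := Nat.cast_pos.2 hn1
  have hlog : Real.log (normT2 ((n : ℝ) • ω)) < -(n * Real.log B) := by
    rwa [inv_mul_lt_iff₀ hn0, mul_neg] at hn
  have hnonneg : 0 ≤ normT2 ((n : ℝ) • ω) := Real.iInf_nonneg fun v => Real.sqrt_nonneg _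
  have hpos : 0 < normT2 ((n : ℝ) • ω) := hnonneg.lt_of_ne' fun h => by
    rw [h, Real.log_zero] at hlog
    nlinarith
  have hlt : normT2 ((n : ℝ) • ω) < (B ^ n)⁻¹ := by
    rwa [← Real.log_lt_log_iff hpos (by positivity), Real.log_inv, Real.log_pow]
  obtain ⟨v, hv⟩ := exists_lt_of_ciInf_lt hlt
  exact ⟨hn1, v, (le_div_iff₀ (by positivity)).1
    (((norm_le_enorm2 _).trans hv.le).trans_eq (one_div _).symm)⟩

theorem Equivariant.intPeriodic_fderiv {P : R2 → R2} (hP : Equivariant P) :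
    IntPeriodic (fderiv ℝ P) := fun z v => by
  rw [← fderiv_comp_add_right, funext fun x => hP x v, fderiv_add_const]

theorem Equivariant.exists_lipschitzWith {P : R2 → R2} (hP : Equivariant P)
    (hsmooth : ContDiff ℝ 1 P) : ∃ L, LipschitzWith L P := by
  obtain ⟨C, hC0, hC⟩ :=
    hP.intPeriodic_fderiv.exists_norm_le (hsmooth.continuous_fderiv one_ne_zero)
  exact ⟨⟨C, hC0⟩, lipschitzWith_of_nnnorm_fderiv_le (hsmooth.differentiable one_ne_zero) hC⟩

theorem IsCrDiffeo.exists_homeomorph_isLift {r : ℕ∞} {f : T2 → T2} (hf : IsCrDiffeo r f)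
    (hiso : IsotopicToId f) : ∃ F : R2 ≃ₜ R2,
      IsLift F f ∧ Equivariant F ∧ ContDiff ℝ r F ∧ ContDiff ℝ r F.symm := by
  obtain ⟨F, G, hlift, hleft, hright, hF, hG⟩ := hf
  obtain ⟨-, E, hE, hliftE, hequivE⟩ := hiso
  obtain ⟨u, hu⟩ := exists_eq_add_intVec_of_pr2_comp_eq hF.continuous hE.continuous
    fun z => (hlift z).trans (hliftE z).symm
  exact ⟨⟨⟨F, G, hleft, hright⟩, hF.continuous, hG.continuous⟩, hlift,
    fun z v => by simp only [Homeomorph.homeomorph_mk_coe, Equiv.coe_fn_mk, hu, hequivE z v,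
      add_right_comm], hF, hG⟩

/-- The lifted form of the setting of the theorem: `F` and `H` lift the `C^r` diffeomorphism `f`
and the semi-conjugacy `h` from `f` to the translation by `pr2 ω`. The lift `F` is the one for which
`H` conjugates it to the translation by `ω` itself. -/
structure LiouvillePseudoRotation (r : ℕ∞) (f : T2 → T2) (ω : R2) where
  F : R2 ≃ₜ R2
  H : R2 → R2
  h : T2 → T2
  κ : ℝ
  L : NNReal
  isotopicToId : IsotopicToId f
  measurePreserving : MeasurePreserving f volume volume
  isLift_F : IsLift F f
  equivariant_F : Equivariant F
  contDiff_F : ContDiff ℝ r F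
  contDiff_symm : ContDiff ℝ r F.symm
  one_le_L : 1 ≤ L
  lipschitz_F : LipschitzWith L F
  lipschitz_symm : LipschitzWith L F.symm
  continuous_h : Continuous h
  surjective_h : Function.Surjective h
  semiconj_h : Function.Semiconj h f (· + pr2 ω)
  isLift_H : IsLift H h
  equivariant_H : Equivariant H
  continuous_H : Continuous H
  semiconj_H : Function.Semiconj H F (· + ω)
  norm_H_sub_le : ∀ z, ‖H z - z‖ ≤ κ
  totallyIrrational : TotallyIrrationalVec ω
  superLiouville : SuperLiouville ω

theorem exists_homeomorph_isLift_semiconj {r : ℕ∞} {f h : T2 → T2} {ω : R2} {H : R2 → R2}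
    (hf : IsCrDiffeo r f) (hiso : IsotopicToId f) (hsemi : Function.Semiconj h f (· + pr2 ω))
    (hlift : IsLift H h) (hequiv : Equivariant H) (hH : Continuous H) : ∃ F : R2 ≃ₜ R2,
      IsLift F f ∧ Equivariant F ∧ ContDiff ℝ r F ∧ ContDiff ℝ r F.symm ∧
        Function.Semiconj H F (· + ω) := by
  obtain ⟨F, hliftF, hequivF, hF, hFsymm⟩ := hf.exists_homeomorph_isLift hiso
  obtain ⟨v, hv⟩ := exists_eq_add_intVec_of_pr2_comp_eq (A := H ∘ F) (B := (H · + ω))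
    (hH.comp F.continuous) (hH.add continuous_const) fun z => by
      rw [Function.comp_apply, hlift, hliftF, hsemi.eq, pr2_add, hlift]
  refine ⟨F.trans (Homeomorph.subRight (intVec v)), fun z => ?_, fun z u => ?_,
    hF.sub contDiff_const, hFsymm.comp (contDiff_id.add contDiff_const), fun z => ?_⟩
  · exact (pr2_sub_intVec _ v).trans (hliftF z)
  · change F (z + intVec u) - intVec v = F z - intVec v + intVec u
    rw [hequivF, add_sub_right_comm]
  · change H (F z - intVec v) = H z + ω
    rw [hequiv.sub_intVec, sub_eq_iff_eq_add]
    exact hv z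

theorem nonempty_liouvillePseudoRotation {r : ℕ∞} (hr : 1 ≤ r) {f : T2 → T2} {ω : R2}
    (hω : TotallyIrrationalVec ω) (hω' : SuperLiouville ω) (hiso : IsotopicToId f)
    (hf : IsCrDiffeo r f) (hmeas : MeasurePreserving f volume volume)
    (hsemi : RegSemiConj f (pr2 ω)) : Nonempty (LiouvillePseudoRotation r f ω) := by
  obtain ⟨h, hh, hsurj, ⟨H, hH, hlift, hequiv⟩, hhf⟩ := hsemi
  obtain ⟨F, hliftF, hequivF, hF, hFsymm, hHF⟩ :=
    exists_homeomorph_isLift_semiconj hf hiso hhf hlift hequiv hH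
  have hr' : ((1 : ℕ∞) : WithTop ℕ∞) ≤ r := mod_cast hr
  obtain ⟨κ, -, hκ⟩ := hequiv.exists_norm_sub_self_le hH
  obtain ⟨L₁, hL₁⟩ := hequivF.exists_lipschitzWith (hF.of_le hr')
  obtain ⟨L₂, hL₂⟩ := (hequivF.inverse F.left_inv F.right_inv).exists_lipschitzWith
    (hFsymm.of_le hr')
  exact ⟨{
    F, H, h, κ
    L := 1 + L₁ + L₂
    isotopicToId := hiso
    measurePreserving := hmeas
    isLift_F := hliftF
    equivariant_F := hequivF
    contDiff_F := hF
    contDiff_symm := hFsymm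
    one_le_L := add_assoc (1 : NNReal) L₁ L₂ ▸ le_self_add
    lipschitz_F := hL₁.weaken (le_add_self.trans le_self_add)
    lipschitz_symm := hL₂.weaken le_add_self
    continuous_h := hh
    surjective_h := hsurj
    semiconj_h := hhf
    isLift_H := hlift
    equivariant_H := hequiv
    continuous_H := hH
    semiconj_H := hHF
    norm_H_sub_le := hκ
    totallyIrrational := hω
    superLiouville := hω' }⟩

theorem one_add_pow_mul_mul_pow_le {L M A : ℝ} (hL : 1 ≤ L) (hM : 1 ≤ M) (hA : 0 ≤ A) {n : ℕ}
    (hn : n ≠ 0) : (1 + L ^ n) * M * A ^ n ≤ (2 * L * M * A) ^ n := by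
  have htwo : (2 : ℝ) ≤ 2 ^ n := le_self_pow₀ one_le_two hn
  have hLn : 1 ≤ L ^ n := one_le_pow₀ hL
  have hone : 1 + L ^ n ≤ 2 ^ n * L ^ n := by nlinarith
  have hMn : M ≤ M ^ n := le_self_pow₀ hM hn
  rw [mul_pow, mul_pow, mul_pow]
  gcongr

namespace LiouvillePseudoRotation

variable {r : ℕ∞} {f : T2 → T2} {ω : R2} (S : LiouvillePseudoRotation r f ω)

theorem equivariant_symm : Equivariant S.F.symm :=
  S.equivariant_F.inverse S.F.left_inv S.F.right_inv

/-- The lift `z ↦ F^n z - v` of `f^n`. -/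
def iterateSub (n : ℕ) (v : ℤ × ℤ) : R2 ≃ₜ R2 where
  toFun z := S.F^[n] z - intVec v
  invFun z := S.F.symm^[n] (z + intVec v)
  left_inv z := by
    simp only [sub_add_cancel, (Function.LeftInverse.iterate S.F.symm_apply_apply n).eq]
  right_inv z := by
    simp only [(Function.RightInverse.iterate S.F.apply_symm_apply n).eq, add_sub_cancel_right]
  continuous_toFun := (S.F.continuous.iterate n).sub continuous_const
  continuous_invFun := (S.F.symm.continuous.iterate n).comp (continuous_add_const _)

theorem iterateSub_apply (n : ℕ) (v : ℤ × ℤ) (z : R2) :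
    S.iterateSub n v z = S.F^[n] z - intVec v := rfl

theorem equivariant_iterateSub (n : ℕ) (v : ℤ × ℤ) : Equivariant (S.iterateSub n v) :=
  fun z u => by
    rw [iterateSub_apply, iterateSub_apply, S.equivariant_F.iterate n, add_sub_right_comm]

theorem isLift_iterateSub (n : ℕ) (v : ℤ × ℤ) : IsLift (S.iterateSub n v) f^[n] := fun z =>
  (pr2_sub_intVec _ v).trans (S.isLift_F.iterate n z)

theorem measurePreserving_iterateSub (n : ℕ) (v : ℤ × ℤ) :
    MeasurePreserving (S.iterateSub n v) volume volume :=
  (S.isLift_iterateSub n v).measurePreserving (S.iterateSub n v).continuous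
    (S.equivariant_iterateSub n v) (S.measurePreserving.iterate n)

theorem semiconj_iterateSub (n : ℕ) (v : ℤ × ℤ) :
    Function.Semiconj S.H (S.iterateSub n v) (· + ((n : ℝ) • ω - intVec v)) := fun z => by
  rw [iterateSub_apply, S.equivariant_H.sub_intVec, semiconj_iterate_apply S.semiconj_H,
    add_sub_assoc]

theorem κ_nonneg : 0 ≤ S.κ := (norm_nonneg _).trans (S.norm_H_sub_le 0)

theorem norm_iterateSub_sub_self_le {n : ℕ} (hn : 1 ≤ n) {v : ℤ × ℤ}
    (hv : ‖(n : ℝ) • ω - intVec v‖ ≤ 1) (z : R2) : ‖S.iterateSub n v z - z‖ ≤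
      (1 + S.L ^ n) * (4 * S.κ + 2) * √‖(n : ℝ) • ω - intVec v‖ :=
  norm_apply_sub_self_le (by simp) (S.measurePreserving_iterateSub n v) S.norm_H_sub_le
    (S.totallyIrrational.natCast_smul_sub_intVec_ne_zero hn v) hv (S.semiconj_iterateSub n v)
    (L := S.L ^ n) (fun x y => by
      rw [iterateSub_apply, iterateSub_apply, edist_sub_right]
      exact S.lipschitz_F.iterate n x y) z

/- The displacement of `F^n - v` is `O(L^n √‖n ω - v‖)`, and `‖n ω - v‖` is infinitely often smaller
than any exponential. -/
theorem frequently_norm_iterateSub_mul_pow_le_one {A : ℝ} (hA : 1 ≤ A) :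
    ∃ᶠ n : ℕ in atTop, 1 ≤ n ∧ ∃ v, ‖(n : ℝ) • ω - intVec v‖ * A ^ n ≤ 1 ∧
      ∀ z, ‖S.iterateSub n v z - z‖ * A ^ n ≤ 1 := by
  have hL : (1 : ℝ) ≤ S.L := S.one_le_L
  have hκ := S.κ_nonneg
  set c : ℝ := 2 * S.L * (4 * S.κ + 2) * A
  have hLκ : 1 ≤ S.L * (4 * S.κ + 2) := one_le_mul_of_one_le_of_one_le hL (by linarith)
  have hAc : 2 * A ≤ c := by
    have hrw : c = S.L * (4 * S.κ + 2) * (2 * A) := by ring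
    exact hrw ▸ le_mul_of_one_le_left (by linarith) hLκ
  refine (S.superLiouville.frequently_norm_mul_pow_le_one (B := c ^ 2) (by nlinarith)).mono ?_
  rintro n ⟨hn, v, hv⟩
  have hδ (a : ℝ) (ha : 0 ≤ a) (hac : a ≤ c ^ 2) : ‖(n : ℝ) • ω - intVec v‖ * a ^ n ≤ 1 :=
    (mul_le_mul_of_nonneg_left (pow_le_pow_left₀ ha hac n) (norm_nonneg _)).trans hv
  have hδ1 := hδ 1 zero_le_one (by nlinarith)
  rw [one_pow, mul_one] at hδ1
  have hsqrt : c ^ n * √‖(n : ℝ) • ω - intVec v‖ ≤ 1 := by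
    rw [← Real.sqrt_sq (by positivity : 0 ≤ c ^ n), ← Real.sqrt_mul (sq_nonneg _), Real.sqrt_le_one,
      pow_right_comm, mul_comm]
    exact hv
  refine ⟨hn, v, hδ A (by linarith) (by nlinarith), fun z => ?_⟩
  calc ‖S.iterateSub n v z - z‖ * A ^ n
      ≤ (1 + S.L ^ n) * (4 * S.κ + 2) * √‖(n : ℝ) • ω - intVec v‖ * A ^ n := by
        gcongr
        exact S.norm_iterateSub_sub_self_le hn hδ1 z
    _ = (1 + S.L ^ n) * (4 * S.κ + 2) * A ^ n * √‖(n : ℝ) • ω - intVec v‖ := by ring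
    _ ≤ c ^ n * √‖(n : ℝ) • ω - intVec v‖ := by
        gcongr
        exact one_add_pow_mul_mul_pow_le hL (by linarith) (by linarith) (by lia)
    _ ≤ 1 := hsqrt

end LiouvillePseudoRotation

/-! ### Invariant functions -/

theorem apply_zpow_of_apply_eq_add {X A : Type*} [TopologicalSpace X] [AddGroup A] {K : X ≃ₜ X}
    {u : X → A} {δ : A} (hu : Function.Semiconj u K (· + δ)) (n : ℤ) (z : X) :
    u ((K ^ n) z) = u z + n • δ := by
  have hstep (m : ℤ) : u ((K ^ (m + 1)) z) = u ((K ^ m) z) + δ := by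
    rw [add_comm, zpow_add, zpow_one, Homeomorph.mul_apply, hu.eq]
  induction n using Int.induction_on with
  | zero => rw [zpow_zero, zero_zsmul, add_zero, Homeomorph.one_apply]
  | succ n ih => rw [hstep, ih, add_zsmul, one_zsmul, add_assoc]
  | pred n ih =>
    have hpred := hstep (-n - 1)
    rw [sub_add_cancel, ih] at hpred
    rw [eq_sub_of_add_eq hpred.symm, sub_zsmul, one_zsmul, add_sub_assoc,
      sub_eq_add_neg]

section OrbitPath

variable {E : Type*} [NormedAddCommGroup E] [NormedSpace ℝ E] (K : E ≃ₜ E) (x : E)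

/-- The concatenation of the images under the powers of `K` of the segment from `x` to `K x`. -/
def orbitPath (t : ℝ) : E :=
  (K ^ ⌊t⌋) (AffineMap.lineMap x (K x) (Int.fract t))

theorem orbitPath_eqOn (n : ℤ) : Set.EqOn (orbitPath K x)
    (fun t => (K ^ n) (AffineMap.lineMap x (K x) (t - n))) (Set.Icc n (n + 1)) := by
  rintro t ⟨hnt, htn⟩
  rcases htn.lt_or_eq with hlt | rfl
  · simp only [orbitPath, Int.fract, Int.floor_eq_iff.2 ⟨hnt, hlt⟩]
  · simp [orbitPath, zpow_add_one]

theorem continuous_orbitPath : Continuous (orbitPath K x) := by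
  have hfin : LocallyFinite fun n : ℤ => Set.Icc (n : ℝ) (n + 1) :=
    locallyFinite_Icc_of_tendsto tendsto_intCast_atTop_atTop
      (tendsto_atBot_add_const_right _ _ (tendsto_intCast_atBot_iff.2 tendsto_id))
  refine hfin.continuous (iUnion_Icc_intCast ℝ) (fun _ => isClosed_Icc) fun n => ?_
  exact (((K ^ n).continuous.comp (AffineMap.lineMap_continuous.comp
    (continuous_id.sub continuous_const))).continuousOn).congr (orbitPath_eqOn K x n)

variable {K x}

theorem apply_orbitPath_mem_image {A : Type*} [AddGroup A] {u : E → A}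
    (hu : ∀ z, u (K z) = u z) {V : Set E} (hV : Convex ℝ V) (hx : x ∈ V) (hKx : K x ∈ V) (t : ℝ) :
    u (orbitPath K x t) ∈ u '' V := by
  rw [orbitPath, apply_zpow_of_apply_eq_add (u := u) (δ := 0)
    (fun z => by simp only [hu, add_zero]), zsmul_zero, add_zero]
  exact Set.mem_image_of_mem u
    (hV.lineMap_mem hx hKx ⟨Int.fract_nonneg t, (Int.fract_lt_one t).le⟩)

theorem norm_orbitPath_sub_le {H : E → E} {δ : E} {κ : ℝ} (hHK : Function.Semiconj H K (· + δ))
    (hH : ∀ z, ‖H z - z‖ ≤ κ) (t : ℝ) :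
    ‖orbitPath K x t - t • δ‖ ≤ 2 * κ + (‖x‖ + ‖K x - x‖) + ‖δ‖ := by
  set s := Int.fract t
  set y := AffineMap.lineMap x (K x) s
  have hs0 : 0 ≤ s := Int.fract_nonneg t
  have hs1 : s ≤ 1 := (Int.fract_lt_one t).le
  have hHpath : H (orbitPath K x t) = H y + (⌊t⌋ : ℝ) • δ := by
    rw [orbitPath, apply_zpow_of_apply_eq_add hHK, Int.cast_smul_eq_zsmul]
  have hsplit : orbitPath K x t - t • δ
      = (H y - y) - (H (orbitPath K x t) - orbitPath K x t) + y - s • δ := by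
    rw [hHpath, ← Int.floor_add_fract t, add_smul, Int.floor_add_fract]
    abel
  have hy : ‖y‖ ≤ ‖x‖ + ‖K x - x‖ := by
    rw [show y = x + s • (K x - x) by rw [add_comm, ← AffineMap.lineMap_apply_module']]
    refine (norm_add_le _ _).trans (add_le_add_right ?_ _)
    rw [norm_smul, Real.norm_of_nonneg hs0]
    exact mul_le_of_le_one_left (norm_nonneg _) hs1
  have hsδ : ‖s • δ‖ ≤ ‖δ‖ := by
    rw [norm_smul, Real.norm_of_nonneg hs0]
    exact mul_le_of_le_one_left (norm_nonneg _) hs1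
  calc ‖orbitPath K x t - t • δ‖
      ≤ ‖H y - y‖ + ‖H (orbitPath K x t) - orbitPath K x t‖ + ‖y‖ + ‖s • δ‖ := by
        rw [hsplit]
        exact (norm_sub_le _ _).trans (add_le_add_left ((norm_add_le _ _).trans
          (add_le_add_left (norm_sub_le _ _) _)) _)
    _ ≤ 2 * κ + (‖x‖ + ‖K x - x‖) + ‖δ‖ := by linarith [hH y, hH (orbitPath K x t)]

end OrbitPath

theorem exists_eq_of_norm_sub_smul_le {E : Type*} [NormedAddCommGroup E] [NormedSpace ℝ E]
    (hdim : Module.finrank ℝ E = 2) {α β : ℝ → E} (hα : Continuous α) (hβ : Continuous β)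
    {δ δ' : E} (hδ : LinearIndependent ℝ ![δ, δ']) {C C' : ℝ} (hαδ : ∀ t, ‖α t - t • δ‖ ≤ C)
    (hβδ : ∀ t, ‖β t - t • δ'‖ ≤ C') : ∃ s t, α s = β t := by
  have : FiniteDimensional ℝ E := Module.finite_of_finrank_eq_succ hdim
  let b : Module.Basis (Fin 2) ℝ E := basisOfLinearIndependentOfCardEqFinrank hδ hdim.symm
  have hb : ⇑b = ![δ, δ'] := coe_basisOfLinearIndependentOfCardEqFinrank hδ hdim.symm
  let M : E ≃L[ℝ] ℂ := (b.equiv Complex.basisOneI (Equiv.refl _)).toContinuousLinearEquiv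
  have hM (s t : ℝ) : M (s • δ + t • δ') = ⟨s, t⟩ := by
    have hb0 : b 0 = δ := congrFun hb 0
    have hb1 : b 1 = δ' := congrFun hb 1
    have h0 : M δ = 1 := hb0 ▸ (b.equiv_apply 0 Complex.basisOneI (Equiv.refl _)).trans (by simp)
    have h1 : M δ' = Complex.I :=
      hb1 ▸ (b.equiv_apply 1 Complex.basisOneI (Equiv.refl _)).trans (by simp)
    rw [map_add, map_smul, map_smul, h0, h1]
    apply Complex.ext <;> simp
  have hsplit (z : ℂ) : M (α z.re - β (-z.im)) - z
      = M ((α z.re - z.re • δ) - (β (-z.im) - (-z.im) • δ')) := by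
    nth_rewrite 3 [← Complex.eta z]
    rw [← hM, ← map_sub]
    congr 1
    module
  obtain ⟨z, hz⟩ := exists_eq_zero_of_norm_sub_self_le (Ψ := fun z => M (α z.re - β (-z.im)))
    (by fun_prop) (C := ‖(M : E →L[ℝ] ℂ)‖ * (C + C')) fun z => by
      rw [hsplit]
      exact ((M : E →L[ℝ] ℂ).le_opNorm _).trans (mul_le_mul_of_nonneg_left
        ((norm_sub_le _ _).trans (add_le_add (hαδ _) (hβδ _))) (norm_nonneg _))
  exact ⟨z.re, -z.im, sub_eq_zero.1 ((map_eq_zero_iff M M.injective).1 hz)⟩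

theorem TotallyIrrationalVec.linearIndependent {ω : R2} (hω : TotallyIrrationalVec ω) {n n' : ℕ}
    {v v' : ℤ × ℤ} (hn : 1 ≤ n)
    (hne : (n : ℝ) • ((n' : ℝ) • ω - intVec v') ≠ (n' : ℝ) • ((n : ℝ) • ω - intVec v)) :
    LinearIndependent ℝ ![(n : ℝ) • ω - intVec v, (n' : ℝ) • ω - intVec v'] := by
  refine (LinearIndependent.pair_iff' (hω.natCast_smul_sub_intVec_ne_zero hn v)).2
    fun a ha => hne ?_
  have hfst : a * ((n : ℝ) * ω.1 - v.1) = n' * ω.1 - v'.1 := congrArg Prod.fst ha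
  have hsnd : a * ((n : ℝ) * ω.2 - v.2) = n' * ω.2 - v'.2 := congrArg Prod.snd ha
  obtain ⟨h₂, h₁, -⟩ := hω (n' * v.2 - n * v'.2) (n * v'.1 - n' * v.1)
    (v.1 * v'.2 - v.2 * v'.1) (by
      push_cast
      linear_combination (n * ω.2 - v.2) * hfst - (n * ω.1 - v.1) * hsnd)
  have h₁' : (n : ℝ) * v'.1 - n' * v.1 = 0 := mod_cast h₁
  have h₂' : (n' : ℝ) * v.2 - n * v'.2 = 0 := mod_cast h₂
  ext
  · change (n : ℝ) * (n' * ω.1 - v'.1) = n' * (n * ω.1 - v.1)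
    linear_combination -h₁'
  · change (n : ℝ) * (n' * ω.2 - v'.2) = n' * (n * ω.2 - v.2)
    linear_combination h₂'

namespace LiouvillePseudoRotation

variable {r : ℕ∞} {f : T2 → T2} {ω : R2} (S : LiouvillePseudoRotation r f ω)

theorem exists_iterateSub_near_id {ε : ℝ} (hε : 0 < ε) (N : ℕ) :
    ∃ n v, N ≤ n ∧ 1 ≤ n ∧ ‖(n : ℝ) • ω - intVec v‖ < ε ∧ ∀ z, ‖S.iterateSub n v z - z‖ < ε := by
  have hA : 1 ≤ 1 + 1 / ε := by linarith [one_div_pos.2 hε]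
  obtain ⟨n, hNn, hn, v, hv, hz⟩ :=
    frequently_atTop.1 (S.frequently_norm_iterateSub_mul_pow_le_one hA) N
  have hlt {a : ℝ} (ha : 0 ≤ a) (hpow : a * (1 + 1 / ε) ^ n ≤ 1) : a < ε := by
    have hle : a * (1 + 1 / ε) ≤ 1 :=
      (mul_le_mul_of_nonneg_left (le_self_pow₀ hA (by lia)) ha).trans hpow
    rw [mul_add, mul_one, mul_one_div] at hle
    rcases ha.eq_or_lt with rfl | hpos
    · exact hε
    · exact (div_lt_one hε).1 (by linarith)
  exact ⟨n, v, hNn, hn, hlt (norm_nonneg _) hv, fun z => hlt (norm_nonneg _) (hz z)⟩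

/- If `u x < u y`, concatenating images of short segments near lifts of `x` and of `y` gives two
paths on which `u` takes values near `u x` and near `u y`; they follow linearly independent
directions, so they cross. -/
theorem not_lt_of_comp_eq (S : LiouvillePseudoRotation r f ω) {u : T2 → ℝ}
    (hu : Continuous u) (huf : ∀ x, u (f x) = u x) (x y : T2) : ¬ u x < u y := fun hxy => by
  obtain ⟨c, hxc, hcy⟩ := exists_between hxy
  obtain ⟨a, rfl⟩ := surjective_pr2 x
  obtain ⟨b, rfl⟩ := surjective_pr2 y
  have hcont : Continuous (u ∘ pr2) := hu.comp continuous_pr2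
  obtain ⟨η, hη, hηc⟩ := Metric.isOpen_iff.1 (isOpen_Iio.preimage hcont) a hxc
  obtain ⟨η', hη', hηc'⟩ := Metric.isOpen_iff.1 (isOpen_Ioi.preimage hcont) b hcy
  have hinv (n v z) : (u ∘ pr2) (S.iterateSub n v z) = (u ∘ pr2) z := by
    have hiter (m : ℕ) (x : T2) : u (f^[m] x) = u x := by
      rw [(Function.Semiconj.iterate_right (gb := id) huf m).eq, Function.iterate_id, id]
    rw [Function.comp_apply, S.isLift_iterateSub, hiter, Function.comp_apply]
  obtain ⟨n, v, -, hn, -, hnear⟩ := S.exists_iterateSub_near_id hη 0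
  have hδ : 0 < ‖(n : ℝ) • ω - intVec v‖ :=
    norm_pos_iff.2 (S.totallyIrrational.natCast_smul_sub_intVec_ne_zero hn v)
  obtain ⟨N, hN⟩ := exists_nat_gt ((n : ℝ) / ‖(n : ℝ) • ω - intVec v‖)
  obtain ⟨n', v', hNn', -, hδ', hnear'⟩ :=
    S.exists_iterateSub_near_id (lt_min one_pos hη') N
  have hne : (n : ℝ) • ((n' : ℝ) • ω - intVec v') ≠ (n' : ℝ) • ((n : ℝ) • ω - intVec v) := by
    refine ne_of_apply_ne norm (ne_of_lt ?_)
    rw [norm_smul, norm_smul, Real.norm_natCast, Real.norm_natCast]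
    calc n * ‖(n' : ℝ) • ω - intVec v'‖
        ≤ n := mul_le_of_le_one_right n.cast_nonneg (hδ'.trans_le (min_le_left _ _)).le
      _ < n' * ‖(n : ℝ) • ω - intVec v‖ :=
        (div_lt_iff₀ hδ).1 (hN.trans_le (Nat.cast_le.2 hNn'))
  obtain ⟨s, t, hst⟩ := exists_eq_of_norm_sub_smul_le (by simp)
    (continuous_orbitPath (S.iterateSub n v) a) (continuous_orbitPath (S.iterateSub n' v') b)
    (S.totallyIrrational.linearIndependent hn hne)
    (norm_orbitPath_sub_le (S.semiconj_iterateSub n v) S.norm_H_sub_le)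
    (norm_orbitPath_sub_le (S.semiconj_iterateSub n' v') S.norm_H_sub_le)
  obtain ⟨p, hp, hps⟩ := apply_orbitPath_mem_image (hinv n v) (convex_ball a η)
    (Metric.mem_ball_self hη) (mem_ball_iff_norm.2 (hnear a)) s
  obtain ⟨q, hq, hqt⟩ := apply_orbitPath_mem_image (hinv n' v') (convex_ball b η')
    (Metric.mem_ball_self hη') (mem_ball_iff_norm.2 ((hnear' b).trans_le (min_le_right _ _))) t
  have hp : (u ∘ pr2) p < c := hηc hp
  have hq : c < (u ∘ pr2) q := hηc' hq
  rw [hps, hst, ← hqt] at hp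
  exact lt_asymm hp hq

theorem apply_eq_apply_of_comp_eq (S : LiouvillePseudoRotation r f ω) {X : Type*}
    [MetricSpace X] {u : T2 → X} (hu : Continuous u) (huf : ∀ x, u (f x) = u x) (x y : T2) :
    u x = u y := by
  have hdist := S.not_lt_of_comp_eq (u := fun z => dist (u z) (u y)) (by fun_prop)
    (fun z => by rw [huf]) y x
  simpa using hdist

end LiouvillePseudoRotation

/-! ### The centralizer -/

theorem IsCrDiffeo.comp {k : ℕ∞} {f g : T2 → T2} (hf : IsCrDiffeo k f) (hg : IsCrDiffeo k g) :
    IsCrDiffeo k (f ∘ g) :=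
  let ⟨F, F', hF, hF₁, hF₂, hFk, hFk'⟩ := hf
  let ⟨G, G', hG, hG₁, hG₂, hGk, hGk'⟩ := hg
  ⟨F ∘ G, G' ∘ F', hF.comp hG, hF₁.comp hG₁, hF₂.comp hG₂, hFk.comp hGk, hGk'.comp hFk'⟩

theorem IsCrDiffeo.inverse {k : ℕ∞} {f g : T2 → T2} (hf : IsCrDiffeo k f)
    (hg : Function.LeftInverse g f) : IsCrDiffeo k g :=
  let ⟨F, F', hF, hF₁, hF₂, hFk, hFk'⟩ := hf
  ⟨F', F, hF.inverse hF₂ hg, hF₂, hF₁, hFk', hFk⟩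

theorem IsotopicToId.comp {f g : T2 → T2} (hf : IsotopicToId f) (hg : IsotopicToId g) :
    IsotopicToId (f ∘ g) :=
  let ⟨hf, F, hF, hFf, hFe⟩ := hf
  let ⟨hg, G, hG, hGg, hGe⟩ := hg
  ⟨hf.comp hg, F ∘ G, hF.comp hG, hFf.comp hGg, hFe.comp hGe⟩

theorem IsotopicToId.inverse {f g : T2 → T2} (hf : IsotopicToId f) (hg : IsHomeomorph g)
    (hgf : Function.LeftInverse g f) : IsotopicToId g :=
  let ⟨_, _, hF, hFf, hFe⟩ := hf
  let F := hF.homeomorph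
  ⟨hg, F.symm, F.symm.isHomeomorph, hFf.inverse F.right_inv hgf,
    hFe.inverse F.left_inv F.right_inv⟩

/-- The group of centralizers of `f` in `Diff^k(𝕋², Vol) ∩ Homeo_*(𝕋²)`, as a set of continuous
maps. -/
def volCentralizer (k : ℕ∞) (f : T2 → T2) : Set C(T2, T2) :=
  {g | IsCrDiffeo k g ∧ IsotopicToId g ∧ MeasurePreserving g volume volume ∧ g ∘ f = f ∘ g}

section Centralizer

variable {k : ℕ∞} {f : T2 → T2} {g g' : C(T2, T2)}

theorem id_mem_volCentralizer (k : ℕ∞) (f : T2 → T2) : ContinuousMap.id T2 ∈ volCentralizer k f :=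
  ⟨⟨id, id, fun _ => rfl, fun _ => rfl, fun _ => rfl, contDiff_id, contDiff_id⟩,
    ⟨IsHomeomorph.id, id, IsHomeomorph.id, fun _ => rfl, fun _ _ => rfl⟩,
    MeasurePreserving.id _, rfl⟩

theorem comp_mem_volCentralizer (hg : g ∈ volCentralizer k f) (hg' : g' ∈ volCentralizer k f) :
    g.comp g' ∈ volCentralizer k f :=
  let ⟨hgk, hgi, hgm, hgf⟩ := hg
  let ⟨hgk', hgi', hgm', hgf'⟩ := hg'
  ⟨hgk.comp hgk', hgi.comp hgi', hgm.comp hgm',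
    ((Function.semiconj_iff_comp_eq.2 hgf).comp_left
      (Function.semiconj_iff_comp_eq.2 hgf')).comp_eq⟩

theorem exists_mem_volCentralizer_comp_eq_id (hg : g ∈ volCentralizer k f) :
    ∃ g' ∈ volCentralizer k f, g'.comp g = ContinuousMap.id T2 := by
  obtain ⟨hgk, hgi, hgm, hgf⟩ := hg
  let e : T2 ≃ₜ T2 := hgi.1.homeomorph
  have hleft : Function.LeftInverse e.symm g := e.left_inv
  have hright : Function.RightInverse e.symm g := e.right_inv
  exact ⟨⟨e.symm, e.symm.continuous⟩, ⟨hgk.inverse hleft, hgi.inverse e.symm.isHomeomorph hleft,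
    MeasurePreserving.symm e.toMeasurableEquiv hgm,
    ((Function.semiconj_iff_comp_eq.2 hgf).inverse_left hleft hright).comp_eq⟩,
    ContinuousMap.ext hleft⟩

end Centralizer

namespace LiouvillePseudoRotation

variable {r k : ℕ∞} {f : T2 → T2} {ω : R2} (S : LiouvillePseudoRotation r f ω) {g : C(T2, T2)}

theorem mem_volCentralizer (S : LiouvillePseudoRotation r f ω) (hk : k ≤ r) :
    ⟨f, S.isotopicToId.1.continuous⟩ ∈ volCentralizer k f :=
  ⟨⟨S.F, S.F.symm, S.isLift_F, S.F.left_inv, S.F.right_inv,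
    S.contDiff_F.of_le (mod_cast hk), S.contDiff_symm.of_le (mod_cast hk)⟩,
    S.isotopicToId, S.measurePreserving, rfl⟩

theorem apply_sub_eq_of_semiconj (S : LiouvillePseudoRotation r f ω) {h : T2 → T2}
    (hh : Continuous h) {w : T2} (hhf : Function.Semiconj h f (· + w))
    (hg : g ∈ volCentralizer k f) (x y : T2) : h (g x) - h x = h (g y) - h y :=
  S.apply_eq_apply_of_comp_eq (u := fun x => h (g x) - h x) (by fun_prop)
    (fun x => by
      have hcomm : g (f x) = f (g x) := congrFun hg.2.2.2 x
      simp only [hcomm, hhf.eq, add_sub_add_right_eq_sub]) x y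

/-- The vector `t` such that `g` is semi-conjugate by `h` to the translation by `t`. -/
def translationVec (g : C(T2, T2)) : T2 := S.h (g 0) - S.h 0

theorem semiconj_translationVec (hg : g ∈ volCentralizer k f) :
    Function.Semiconj S.h g (· + S.translationVec g) := fun x => by
  rw [translationVec, S.apply_sub_eq_of_semiconj S.continuous_h S.semiconj_h hg 0 x]
  exact (add_sub_cancel _ _).symm

theorem translationVec_comp (hg : g ∈ volCentralizer k f) (g' : C(T2, T2)) :
    S.translationVec (g.comp g') = S.translationVec g + S.translationVec g' := by
  rw [translationVec, ContinuousMap.comp_apply, (S.semiconj_translationVec hg).eq,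
    add_comm, add_sub_assoc, translationVec, translationVec]

theorem exists_homeomorph_isLift_semiconj_translationVec (hg : g ∈ volCentralizer k f) {c : R2}
    (hc : pr2 c = S.translationVec g) : ∃ A : R2 ≃ₜ R2, IsLift A g ∧
      MeasurePreserving A volume volume ∧ Function.Semiconj S.H A (· + c) := by
  obtain ⟨-, ⟨-, B, hB, hBg, hBe⟩, hgm, -⟩ := id hg
  obtain ⟨v, hv⟩ := exists_eq_add_intVec_of_pr2_comp_eq (A := S.H ∘ B) (B := (S.H · + c))
    (S.continuous_H.comp hB.continuous) (by have := S.continuous_H; fun_prop) fun z => by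
      rw [Function.comp_apply, S.isLift_H, hBg, (S.semiconj_translationVec hg).eq, pr2_add,
        S.isLift_H, hc]
  let A : R2 ≃ₜ R2 := hB.homeomorph.trans (Homeomorph.subRight (intVec v))
  have hA (z : R2) : A z = B z - intVec v := rfl
  have hAg : IsLift A g := fun z => by rw [hA, pr2_sub_intVec, hBg]
  refine ⟨A, hAg, hAg.measurePreserving A.continuous (fun z u => ?_) hgm, fun z => ?_⟩
  · rw [hA, hA, hBe, add_sub_right_comm]
  · rw [hA, S.equivariant_H.sub_intVec, sub_eq_iff_eq_add]
    exact hv z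

end LiouvillePseudoRotation

theorem exists_isFree_ball_comp {X : Type*} [MetricSpace X] {K : X → X} {x : X}
    (hK : ContinuousAt K x) (hx : K x ≠ x) : ∃ ρ > 0, ρ ≤ 1 ∧
      ∀ G : X → X, (∀ z, dist (G z) z < ρ) → IsFree (G ∘ K) (Metric.ball x ρ) := by
  have hd : 0 < dist (K x) x / 4 := by linarith [dist_pos.2 hx]
  obtain ⟨η, hη, hKη⟩ := Metric.continuousAt_iff.1 hK _ hd
  refine ⟨min η (min (dist (K x) x / 4) 1), by positivity,
    (min_le_right _ _).trans (min_le_right _ _), fun G hG z hz hGz => ?_⟩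
  rw [Metric.mem_ball, lt_min_iff, lt_min_iff, Function.comp_apply] at hGz
  have hzK := hKη (lt_min_iff.1 (Metric.mem_ball.1 hz)).1
  have hGK := (lt_min_iff.1 (lt_min_iff.1 (hG (K z))).2).1
  rw [dist_comm] at hzK hGK
  have htri := dist_triangle4 (K x) (K z) (G (K z)) x
  linarith [hGz.2.1]

namespace LiouvillePseudoRotation

variable {r k : ℕ∞} {f : T2 → T2} {ω : R2} (S : LiouvillePseudoRotation r f ω)

/- Otherwise `K` moves a small ball off itself; so does its composition with a lift of an iterate
of `f` close to the identity, contradicting the area bound for free balls. -/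
theorem eq_self_of_semiconj_id {K : R2 ≃ₜ R2} (hK : MeasurePreserving K volume volume)
    (hHK : ∀ z, S.H (K z) = S.H z) (x : R2) : K x = x := by
  by_contra hx
  have hκ := S.κ_nonneg
  obtain ⟨ρ, hρ, hρ1, hfree⟩ := exists_isFree_ball_comp K.continuous.continuousAt hx
  obtain ⟨n, v, -, hn, hδ, hG⟩ :=
    S.exists_iterateSub_near_id (ε := min ρ (ρ ^ 2 / (2 * S.κ + 2) ^ 2)) (by positivity) 0
  let P : R2 ≃ₜ R2 := K.trans (S.iterateSub n v)
  have hHP : Function.Semiconj S.H P (· + ((n : ℝ) • ω - intVec v)) := fun z => by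
    rw [Homeomorph.trans_apply, (S.semiconj_iterateSub n v).eq, hHK]
  have hle : ρ ^ 2 ≤ (ρ + 2 * S.κ + 1) ^ 2 * ‖(n : ℝ) • ω - intVec v‖ :=
    sq_radius_le_of_isFree_ball (by simp)
      ⟨_, norm_sub_self_le_of_semiconj hHP S.norm_H_sub_le⟩
      ((S.measurePreserving_iterateSub n v).comp hK) S.norm_H_sub_le
      (S.totallyIrrational.natCast_smul_sub_intVec_ne_zero hn v) hHP hρ.le
      (hfree _ fun z => (dist_eq_norm _ z).trans_lt ((hG z).trans_le (min_le_left _ _)))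
  have hlt : ‖(n : ℝ) • ω - intVec v‖ * (2 * S.κ + 2) ^ 2 < ρ ^ 2 :=
    (lt_div_iff₀ (by positivity)).1 (hδ.trans_le (min_le_right _ _))
  have hmono : (ρ + 2 * S.κ + 1) ^ 2 ≤ (2 * S.κ + 2) ^ 2 :=
    pow_le_pow_left₀ (by linarith) (by linarith) 2
  nlinarith [norm_nonneg ((n : ℝ) • ω - intVec v)]

theorem injOn_translationVec : Set.InjOn S.translationVec (volCentralizer k f) := by
  intro g hg g' hg' heq
  obtain ⟨c, hc⟩ := surjective_pr2 (S.translationVec g)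
  obtain ⟨A, hAg, hA, hHA⟩ := S.exists_homeomorph_isLift_semiconj_translationVec hg hc
  obtain ⟨B, hBg, hB, hHB⟩ :=
    S.exists_homeomorph_isLift_semiconj_translationVec hg' (hc.trans heq)
  have hid (z : R2) : B.symm (A z) = z :=
    S.eq_self_of_semiconj_id (K := A.trans B.symm)
      ((MeasurePreserving.symm B.toMeasurableEquiv hB).comp hA) (fun z => by
        have hBz := hHB (B.symm (A z))
        rw [B.apply_symm_apply, hHA z] at hBz
        exact (add_right_cancel hBz).symm) z
  ext1 x
  obtain ⟨z, rfl⟩ := surjective_pr2 x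
  rw [← hAg, ← hBg, ← B.symm_apply_eq.1 (hid z)]

/- `x ↦ inf_{g} dist (g x) y` is continuous and `f`-invariant, hence constant, and vanishes at `y`;
by compactness the infimum is attained. -/
theorem exists_mem_volCentralizer_apply_eq (S : LiouvillePseudoRotation r f ω) (hk : k ≤ r)
    (hcpt : IsCompact (volCentralizer k f)) (x y : T2) : ∃ g ∈ volCentralizer k f, g x = y := by
  let φ (x : T2) (g : C(T2, T2)) : ℝ := dist (g x) y
  have hφ : Continuous ↿φ := by
    change Continuous fun p : T2 × C(T2, T2) => dist (p.2 p.1) y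
    fun_prop
  have hid := id_mem_volCentralizer k f
  have hf := S.mem_volCentralizer hk
  obtain ⟨f', hf', hff'⟩ := exists_mem_volCentralizer_comp_eq_id hf
  have hinv (x : T2) : sInf (φ (f x) '' volCentralizer k f) = sInf (φ x '' volCentralizer k f) := by
    congr 1
    refine Set.Subset.antisymm ?_ ?_
    · rintro _ ⟨g, hg, rfl⟩
      exact ⟨_, comp_mem_volCentralizer hg hf, rfl⟩
    · rintro _ ⟨g, hg, rfl⟩
      have hfx : f' (f x) = x := DFunLike.congr_fun hff' x
      exact ⟨_, comp_mem_volCentralizer hg hf', by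
        simp only [φ, ContinuousMap.comp_apply, hfx]⟩
  have hy : sInf (φ y '' volCentralizer k f) ≤ 0 :=
    csInf_le ⟨0, Set.forall_mem_image.2 fun _ _ => dist_nonneg⟩ ⟨_, hid, dist_self y⟩
  obtain ⟨g, hg, hgx⟩ :=
    (hcpt.image (f := φ x) (by fun_prop)).sInf_mem (Set.Nonempty.image _ ⟨_, hid⟩)
  refine ⟨g, hg, dist_le_zero.1 ?_⟩
  calc dist (g x) y = sInf (φ x '' volCentralizer k f) := hgx
    _ = sInf (φ y '' volCentralizer k f) :=
      S.apply_eq_apply_of_comp_eq (hcpt.continuous_sInf hφ) hinv x y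
    _ ≤ 0 := hy

theorem topLinearizable_of_isCompact (S : LiouvillePseudoRotation r f ω) (hk : k ≤ r)
    (hcpt : IsCompact (volCentralizer k f)) : TopLinearizable f := by
  refine ⟨pr2 ω, S.h, isHomeomorph_iff_continuous_bijective.2
    ⟨S.continuous_h, fun x y hxy => ?_, S.surjective_h⟩, S.semiconj_h⟩
  obtain ⟨g, hg, rfl⟩ := S.exists_mem_volCentralizer_apply_eq hk hcpt x y
  have hgid : g = ContinuousMap.id T2 :=
    S.injOn_translationVec hg (id_mem_volCentralizer k f) <| by
      rw [translationVec, S.apply_sub_eq_of_semiconj S.continuous_h S.semiconj_h hg 0 x, ← hxy,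
        sub_self, translationVec, ContinuousMap.id_apply, sub_self]
  rw [hgid, ContinuousMap.id_apply]

/- A conjugacy to a translation conjugates every centralizer to a translation, and the translations
form a compact group. -/
theorem isCompact_closure_of_topLinearizable (S : LiouvillePseudoRotation r f ω)
    (hlin : TopLinearizable f) : IsCompact (closure (volCentralizer k f)) := by
  obtain ⟨w, h, hh, hw⟩ := hlin
  let e : T2 ≃ₜ T2 := hh.homeomorph
  let Θ : C(T2 × T2, T2) := ⟨fun p => e.symm (e p.2 + p.1), by fun_prop⟩
  refine (isCompact_range Θ.curry.continuous).closure_of_subset fun g hg => ?_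
  refine ⟨e (g 0) - e 0, ContinuousMap.ext fun x => ?_⟩
  change e.symm (e x + (e (g 0) - e 0)) = g x
  rw [S.apply_sub_eq_of_semiconj (h := e) hh.continuous hw hg 0 x, add_sub_cancel,
    e.symm_apply_apply]

end LiouvillePseudoRotation

/-! ### Bounds on iterated derivatives -/

section NontriviallyNormedField

variable {𝕜 E G : Type*} [NontriviallyNormedField 𝕜] [NormedAddCommGroup E] [NormedSpace 𝕜 E]
  [NormedAddCommGroup G] [NormedSpace 𝕜 G]

theorem contDiff_iterate {k : WithTop ℕ∞} {P : E → E} (hP : ContDiff 𝕜 k P) :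
    ∀ n : ℕ, ContDiff 𝕜 k P^[n]
  | 0 => contDiff_id
  | n + 1 => (contDiff_iterate hP n).comp hP

theorem iteratedFDeriv_sub_const {i : ℕ} (hi : i ≠ 0) (φ : E → G) (c : G) :
    iteratedFDeriv 𝕜 i (fun z => φ z - c) = iteratedFDeriv 𝕜 i φ := by
  obtain ⟨j, rfl⟩ := Nat.exists_eq_add_one_of_ne_zero hi
  have hfderiv : fderiv 𝕜 (fun z => φ z - c) = fderiv 𝕜 φ := funext fun _ => fderiv_sub_const c
  funext z
  rw [iteratedFDeriv_succ_eq_comp_right, iteratedFDeriv_succ_eq_comp_right, hfderiv]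

theorem norm_iteratedFDeriv_id_le_one {i : ℕ} (hi : i ≠ 0) (z : E) :
    ‖iteratedFDeriv 𝕜 i (id : E → E) z‖ ≤ 1 := by
  obtain ⟨j, rfl⟩ := Nat.exists_eq_add_one_of_ne_zero hi
  have hid : fderiv 𝕜 (id : E → E) = fun _ => .id 𝕜 E := funext fun _ => fderiv_id
  rw [← norm_iteratedFDeriv_fderiv, hid]
  rcases eq_or_ne j 0 with rfl | hj
  · rw [norm_iteratedFDeriv_zero]
    exact ContinuousLinearMap.norm_id_le
  · rw [iteratedFDeriv_const_of_ne hj]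
    simp

end NontriviallyNormedField

section IteratedDerivatives

variable {E G : Type*} [NormedAddCommGroup E] [NormedSpace ℝ E]
  [NormedAddCommGroup G] [NormedSpace ℝ G]

/-- All derivatives of `φ` whose order belongs to `s` are bounded by `M`; the order `0` refers to
`φ` itself. -/
def DerivativesBoundedBy (s : Set ℕ) (M : ℝ) (φ : E → G) : Prop :=
  ∀ i ∈ s, ∀ z, ‖iteratedFDeriv ℝ i φ z‖ ≤ M

theorem DerivativesBoundedBy.mono {s t : Set ℕ} {M M' : ℝ} {φ : E → G}
    (h : DerivativesBoundedBy s M φ) (hts : t ⊆ s) (hM : M ≤ M') : DerivativesBoundedBy t M' φ :=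
  fun i hi z => (h i (hts hi) z).trans hM

theorem DerivativesBoundedBy.sub {s : Set ℕ} {M M' : ℝ} {φ ψ : E → G} {k : ℕ}
    (h : DerivativesBoundedBy s M φ) (h' : DerivativesBoundedBy s M' ψ) (hφ : ContDiff ℝ k φ)
    (hψ : ContDiff ℝ k ψ) (hs : s ⊆ Set.Iic k) : DerivativesBoundedBy s (M + M') (φ - ψ) :=
  fun i hi z => by
    have hik : (i : WithTop ℕ∞) ≤ k := Nat.cast_le.2 (hs hi)
    rw [iteratedFDeriv_sub (hφ.of_le hik) (hψ.of_le hik)]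
    exact (norm_sub_le _ _).trans (add_le_add (h i hi z) (h' i hi z))

theorem norm_iteratedFDeriv_iterate_le {P : E → E} {k : ℕ} {M : ℝ} (hP : ContDiff ℝ k P)
    (hM : 1 ≤ M) (h : DerivativesBoundedBy (Set.Icc 1 k) M P) (n : ℕ) {i : ℕ}
    (hi : i ∈ Set.Icc 1 k) (z : E) :
    ‖iteratedFDeriv ℝ i P^[n] z‖ ≤ ((k.factorial * M) ^ n) ^ i := by
  induction n generalizing i with
  | zero => simpa using norm_iteratedFDeriv_id_le_one (by have := hi.1; lia) z
  | succ n ih =>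
    have hi0 : i ≠ 0 := by have := hi.1; lia
    have hPi : ContDiff ℝ i P := hP.of_le (Nat.cast_le.2 hi.2)
    have hfac : (1 : ℝ) ≤ k.factorial := Nat.one_le_cast.2 k.factorial_pos
    have hD : 1 ≤ k.factorial * M := one_le_mul_of_one_le_of_one_le hfac hM
    -- Subtracting `P (P^n z)` makes the derivative of order `0` vanish at `P^n z`.
    have hcomp := norm_iteratedFDeriv_comp_le (n := i) (N := i) (f := P^[n])
      (g := fun y => P y - P (P^[n] z)) (C := M) (D := (k.factorial * M) ^ n)
      (hPi.sub contDiff_const) (contDiff_iterate hPi n) le_rfl z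
      (fun j hj => by
        rcases eq_or_ne j 0 with rfl | hj0
        · rw [norm_iteratedFDeriv_zero, sub_self, norm_zero]
          linarith
        · rw [iteratedFDeriv_sub_const hj0]
          exact h j ⟨Nat.one_le_iff_ne_zero.2 hj0, hj.trans hi.2⟩ _)
      (fun j hj1 hji => ih ⟨hj1, hji.trans hi.2⟩)
    have hsucc : (fun y => P y - P (P^[n] z)) ∘ P^[n] = fun y => P^[n + 1] y - P (P^[n] z) := by
      funext y
      rw [Function.comp_apply, Function.iterate_succ_apply']
    rw [hsucc, iteratedFDeriv_sub_const hi0] at hcomp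
    calc ‖iteratedFDeriv ℝ i P^[n + 1] z‖
        ≤ i.factorial * M * ((k.factorial * M) ^ n) ^ i := hcomp
      _ ≤ (k.factorial * M) ^ i * ((k.factorial * M) ^ n) ^ i := by
        gcongr
        refine le_trans ?_ (le_self_pow₀ hD hi0)
        gcongr
        exact hi.2
      _ = ((k.factorial * M) ^ (n + 1)) ^ i := by rw [← mul_pow, ← pow_succ']

theorem DerivativesBoundedBy.iterate {P : E → E} {k : ℕ} {M : ℝ}
    (h : DerivativesBoundedBy (Set.Icc 1 k) M P) (hP : ContDiff ℝ k P) (hM : 1 ≤ M) (n : ℕ) :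
    DerivativesBoundedBy (Set.Icc 1 k) (((k.factorial * M) ^ k) ^ n) P^[n] := fun i hi z => by
  rw [pow_right_comm]
  refine (norm_iteratedFDeriv_iterate_le hP hM h n hi z).trans (pow_le_pow_right₀ ?_ hi.2)
  exact one_le_pow₀ (one_le_mul_of_one_le_of_one_le (Nat.one_le_cast.2 k.factorial_pos) hM)

theorem derivativesBoundedBy_iterate_add_sub {P : E → E} {k : ℕ} (hsmooth : ContDiff ℝ k P)
    {M : ℝ} (hM : 1 ≤ M)
    (hbound : ∀ n, DerivativesBoundedBy (Set.Icc 1 k) (M ^ n) P^[n]) {n N : ℕ} (hn : n ≠ 0)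
    (hN : N ≤ n) (c : E) : DerivativesBoundedBy (Set.Icc 1 k) ((2 * M ^ 2) ^ n)
      ((fun z => P^[N + n] z - c) - P^[N]) := by
  have hpow (p : ℕ) (hp : p ≤ 2 * n) : M ^ p ≤ (M ^ 2) ^ n :=
    (pow_le_pow_right₀ hM hp).trans_eq (pow_mul M 2 n)
  have hadd : DerivativesBoundedBy (Set.Icc 1 k) (M ^ (N + n)) fun z => P^[N + n] z - c :=
    fun i hi => by
      rw [iteratedFDeriv_sub_const (Nat.one_le_iff_ne_zero.1 hi.1)]
      exact hbound _ i hi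
  refine (hadd.sub (hbound N) ((contDiff_iterate hsmooth _).sub contDiff_const)
    (contDiff_iterate hsmooth N) fun i hi => hi.2).mono subset_rfl ?_
  have htwo : (2 : ℝ) ≤ 2 ^ n := le_self_pow₀ one_le_two hn
  calc M ^ (N + n) + M ^ N ≤ 2 * (M ^ 2) ^ n := by linarith [hpow (N + n) (by lia), hpow N (by lia)]
    _ ≤ (2 * M ^ 2) ^ n := by
      rw [mul_pow]
      gcongr

/- Landau's inequality: Taylor's formula at `x` with increment `t • e`, where `‖e‖ = 1`. -/
theorem norm_fderiv_le_of_norm_le {ψ : E → G} (hψ : Differentiable ℝ ψ) {a b t : ℝ} (hb : 0 ≤ b)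
    (ht : 0 < t) (hψa : ∀ z, ‖ψ z‖ ≤ a) {x : E}
    (hψb : ∀ y, ‖fderiv ℝ ψ y - fderiv ℝ ψ x‖ ≤ b * ‖y - x‖) :
    ‖fderiv ℝ ψ x‖ ≤ 2 * a / t + b * t := by
  have ha : 0 ≤ a := (norm_nonneg _).trans (hψa x)
  refine ContinuousLinearMap.opNorm_le_of_unit_norm (by positivity) fun e he => ?_
  have hte : ‖t • e‖ = t := by rw [norm_smul, he, mul_one, Real.norm_of_nonneg ht.le]
  have htaylor : ‖ψ (x + t • e) - ψ x - t • fderiv ℝ ψ x e‖ ≤ b * t * t := by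
    simpa [hte] using (convex_closedBall x t).norm_image_sub_le_of_norm_fderiv_le' (𝕜 := ℝ)
      (f := ψ) (y := x + t • e) (fun y _ => hψ y)
      (fun y hy => (hψb y).trans
        (mul_le_mul_of_nonneg_left (mem_closedBall_iff_norm.1 hy) hb))
      (Metric.mem_closedBall_self ht.le) (by simp [hte])
  have hscaled : t * ‖fderiv ℝ ψ x e‖ ≤ 2 * a + b * t * t := by
    calc t * ‖fderiv ℝ ψ x e‖ = ‖t • fderiv ℝ ψ x e‖ := by
          rw [norm_smul, Real.norm_of_nonneg ht.le]
      _ ≤ ‖ψ (x + t • e) - ψ x‖ + ‖ψ (x + t • e) - ψ x - t • fderiv ℝ ψ x e‖ :=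
        norm_le_insert _ _
      _ ≤ 2 * a + b * t * t := by
        linarith [norm_sub_le (ψ (x + t • e)) (ψ x), hψa (x + t • e), hψa x]
  rw [← mul_le_mul_iff_right₀ ht]
  calc t * ‖fderiv ℝ ψ x e‖ ≤ 2 * a + b * t * t := hscaled
    _ = t * (2 * a / t + b * t) := by field_simp

theorem DerivativesBoundedBy.interpolate {φ : E → G} {i : ℕ} {a b t : ℝ}
    (ha : DerivativesBoundedBy {i} a φ) (hb : DerivativesBoundedBy {i + 2} b φ)
    (hφ : ContDiff ℝ (i + 2 : ℕ) φ) (ht : 0 < t) :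
    DerivativesBoundedBy {i + 1} (2 * a / t + b * t) φ := by
  rintro _ rfl x
  have hb0 : 0 ≤ b := (norm_nonneg _).trans (hb _ rfl x)
  rw [← norm_fderiv_iteratedFDeriv]
  refine norm_fderiv_le_of_norm_le
    (hφ.differentiable_iteratedFDeriv (Nat.cast_lt.2 (by lia))) hb0 ht (ha i rfl) fun y => ?_
  rw [fderiv_iteratedFDeriv, Function.comp_apply, Function.comp_apply, ← dist_eq_norm,
    LinearIsometryEquiv.dist_map, dist_eq_norm]
  refine convex_univ.norm_image_sub_le_of_norm_fderiv_le (𝕜 := ℝ)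
    (fun z _ => hφ.differentiable_iteratedFDeriv (Nat.cast_lt.2 (by lia)) z) (fun z _ => ?_)
    (Set.mem_univ x) (Set.mem_univ y)
  rw [norm_fderiv_iteratedFDeriv]
  exact hb _ rfl z

theorem interpolation_bound_le {A M : ℝ} (hA : 1 ≤ A) (hM : 1 ≤ M) {n : ℕ} (hn : n ≠ 0) :
    2 * ((8 * A ^ 2 * M) ^ n)⁻¹ / ((2 * A * M) ^ n)⁻¹ + M ^ n * ((2 * A * M) ^ n)⁻¹ ≤
      (A ^ n)⁻¹ := by
  have : 0 < A := by linarith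
  have : 0 < M := by linarith
  have hsplit : (8 * A ^ 2 * M) ^ n = 4 ^ n * A ^ n * (2 * A * M) ^ n := by
    rw [← mul_pow, ← mul_pow]
    ring
  have hpow (c : ℝ) (h0 : 0 ≤ c) (h1 : c ≤ 1) : c ^ n ≤ c := pow_le_of_le_one h0 h1 hn
  calc 2 * ((8 * A ^ 2 * M) ^ n)⁻¹ / ((2 * A * M) ^ n)⁻¹ + M ^ n * ((2 * A * M) ^ n)⁻¹
      = (2 * (1 / 4) ^ n + (1 / 2) ^ n) * (A ^ n)⁻¹ := by
        rw [hsplit, mul_pow, mul_pow, div_pow, div_pow, one_pow]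
        field_simp
    _ ≤ 1 * (A ^ n)⁻¹ := by
        gcongr
        linarith [hpow (1 / 4) (by norm_num) (by norm_num),
          hpow (1 / 2) (by norm_num) (by norm_num)]
    _ = (A ^ n)⁻¹ := one_mul _

/- Landau–Kolmogorov interpolation: a map that is exponentially small at a high enough rate, and
whose derivatives up to order `k` grow at most exponentially, has exponentially small derivatives of
all orders below `k`. -/
theorem exists_derivativesBoundedBy_of_norm_le {k i₀ : ℕ} (hi₀ : i₀ < k) {A M : ℝ} (hA : 1 ≤ A)
    (hM : 1 ≤ M) : ∃ B : ℝ, 1 ≤ B ∧ ∀ n : ℕ, n ≠ 0 → ∀ φ : E → G, ContDiff ℝ k φ →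
      DerivativesBoundedBy (Set.Icc 1 k) (M ^ n) φ → (∀ z, ‖φ z‖ ≤ (B ^ n)⁻¹) →
        DerivativesBoundedBy (Set.Iic i₀) (A ^ n)⁻¹ φ := by
  induction i₀ generalizing A with
  | zero =>
    refine ⟨A, hA, fun n _ φ _ _ hsmall i hi z => ?_⟩
    obtain rfl : i = 0 := Nat.le_zero.1 hi
    exact norm_iteratedFDeriv_zero.trans_le (hsmall z)
  | succ i₀ ih =>
    have hA' : 1 ≤ 8 * A ^ 2 * M := by nlinarith
    obtain ⟨B₁, hB₁, h₁⟩ := ih (by lia) hA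
    obtain ⟨B₂, hB₂, h₂⟩ := ih (by lia) hA'
    refine ⟨max B₁ B₂, le_max_of_le_left hB₁, fun n hn φ hφ hM hsmall i hi => ?_⟩
    have hlow := h₁ n hn φ hφ hM fun z => (hsmall z).trans (by gcongr; exact le_max_left _ _)
    have hlow' := h₂ n hn φ hφ hM fun z => (hsmall z).trans (by gcongr; exact le_max_right _ _)
    rcases Nat.le_succ_iff.1 hi with hle | rfl
    · exact hlow i hle
    · exact ((hlow'.mono (Set.singleton_subset_iff.2 Set.self_mem_Iic) le_rfl).interpolate
        (hM.mono (Set.singleton_subset_iff.2 ⟨by lia, hi₀⟩) le_rfl)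
        (hφ.of_le (Nat.cast_le.2 hi₀)) (by positivity)).mono subset_rfl
          (interpolation_bound_le hA ‹_› hn) _ rfl

theorem exists_contDiff_tendstoUniformly [CompleteSpace G] {k : ℕ∞} {P : ℕ → E → G}
    (hP : ∀ m, ContDiff ℝ k (P m))
    (h : ∀ m, DerivativesBoundedBy {i | i ≤ m ∧ (i : ℕ∞) ≤ k} ((1 / 2) ^ m) (P (m + 1) - P m)) :
    ∃ Q, ContDiff ℝ k Q ∧ TendstoUniformly P Q atTop := by
  have hsmooth : ContDiff ℝ k fun z => ∑' m, (P (m + 1) - P m) z :=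
    contDiff_tsum_of_eventually (v := fun _ m => (1 / 2 : ℝ) ^ m)
      (fun m => (hP (m + 1)).sub (hP m)) (fun _ _ => summable_geometric_two) fun i hi => by
        rw [Nat.cofinite_eq_atTop]
        filter_upwards [eventually_ge_atTop i] with m hm
        exact h m i ⟨hm, hi⟩
  have hunif := tendstoUniformly_tsum_nat (f := fun m => P (m + 1) - P m) summable_geometric_two
    fun m z => norm_iteratedFDeriv_zero.symm.trans_le (h m 0 ⟨m.zero_le, zero_le⟩ z)
  refine ⟨fun z => P 0 z + ∑' m, (P (m + 1) - P m) z, (hP 0).add hsmooth, ?_⟩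
  rw [Metric.tendstoUniformly_iff] at hunif ⊢
  refine fun ε hε => (hunif ε hε).mono fun m hm z => ?_
  have htelescope : P m z = P 0 z + ∑ j ∈ Finset.range m, (P (j + 1) - P j) z := by
    simp only [Pi.sub_apply, Finset.sum_range_sub (fun j => P j z), add_sub_cancel]
  rw [htelescope, dist_add_left]
  exact hm z

end IteratedDerivatives

theorem Equivariant.intPeriodic_iteratedFDeriv {P : R2 → R2} (hP : Equivariant P) {i : ℕ}
    (hi : i ≠ 0) : IntPeriodic (iteratedFDeriv ℝ i P) := fun z v => by
  have hshift : (fun z => P (z + intVec v)) = fun z => P z - -intVec v :=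
    funext fun z => (hP z v).trans (sub_neg_eq_add _ _).symm
  rw [← iteratedFDeriv_comp_add_right, hshift, iteratedFDeriv_sub_const hi]

theorem Equivariant.exists_derivativesBoundedBy {P : R2 → R2} (hP : Equivariant P) {k : ℕ}
    (hsmooth : ContDiff ℝ k P) : ∃ M : ℝ, 1 ≤ M ∧ DerivativesBoundedBy (Set.Icc 1 k) M P := by
  induction k with
  | zero => exact ⟨1, le_rfl, fun i hi => absurd hi (by simp)⟩
  | succ k ih =>
    obtain ⟨M, hM, hMbound⟩ := ih (hsmooth.of_le (Nat.cast_le.2 k.le_succ))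
    obtain ⟨C, -, hC⟩ := (hP.intPeriodic_iteratedFDeriv k.succ_ne_zero).exists_norm_le
      (hsmooth.continuous_iteratedFDeriv le_rfl)
    refine ⟨max M C, le_max_of_le_left hM, fun i hi z => ?_⟩
    rcases Nat.le_succ_iff.1 hi.2 with hik | rfl
    · exact (hMbound i ⟨hi.1, hik⟩ z).trans (le_max_left _ _)
    · exact (hC z).trans (le_max_right _ _)

theorem Equivariant.exists_derivativesBoundedBy_iterate {P : R2 → R2} (hP : Equivariant P) {k : ℕ}
    (hsmooth : ContDiff ℝ k P) :
    ∃ M : ℝ, 1 ≤ M ∧ ∀ n, DerivativesBoundedBy (Set.Icc 1 k) (M ^ n) P^[n] := by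
  obtain ⟨M, hM, hMbound⟩ := hP.exists_derivativesBoundedBy hsmooth
  have hfac : (1 : ℝ) ≤ k.factorial := Nat.one_le_cast.2 k.factorial_pos
  exact ⟨(k.factorial * M) ^ k, one_le_pow₀ (one_le_mul_of_one_le_of_one_le hfac hM),
    hMbound.iterate hsmooth hM⟩

theorem Equivariant.norm_iterate_add_sub_le {P : R2 → R2} (hP : Equivariant P) {L : NNReal}
    (hL : LipschitzWith L P) (hL1 : 1 ≤ L) {n N : ℕ} (hN : N ≤ n) (v : ℤ × ℤ) (z : R2) :
    ‖P^[N + n] z - intVec v - P^[N] z‖ ≤ L ^ n * ‖P^[n] z - intVec v - z‖ := by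
  rw [Function.iterate_add_apply, ← (hP.iterate N).sub_intVec]
  calc ‖P^[N] (P^[n] z - intVec v) - P^[N] z‖ ≤ L ^ N * ‖P^[n] z - intVec v - z‖ := by
        simpa [dist_eq_norm] using (hL.iterate N).dist_le_mul (P^[n] z - intVec v) z
    _ ≤ L ^ n * ‖P^[n] z - intVec v - z‖ := by gcongr

theorem Equivariant.exists_derivativesBoundedBy_iterate_add_sub {P : R2 → R2} (hP : Equivariant P)
    {k : ℕ} (hsmooth : ContDiff ℝ k P) {L : NNReal} (hL : LipschitzWith L P) (hL1 : 1 ≤ L) {A : ℝ}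
    (hA : 1 ≤ A) : ∃ B : ℝ, 1 ≤ B ∧ ∀ (n : ℕ) (v : ℤ × ℤ), n ≠ 0 →
      (∀ z, ‖P^[n] z - intVec v - z‖ ≤ (B ^ n)⁻¹) → ∀ N ≤ n,
        DerivativesBoundedBy (Set.Iio k) (A ^ n)⁻¹ ((fun z => P^[N + n] z - intVec v) - P^[N]) := by
  rcases k with _ | k
  · exact ⟨1, le_rfl, fun n v _ _ N _ i hi => absurd hi i.not_lt_zero⟩
  obtain ⟨M, hM, hbound⟩ := hP.exists_derivativesBoundedBy_iterate hsmooth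
  obtain ⟨B, hB, hsmall⟩ := exists_derivativesBoundedBy_of_norm_le (E := R2) (G := R2)
    k.lt_succ_self hA (M := 2 * M ^ 2) (by nlinarith)
  have hL1' : (1 : ℝ) ≤ L := hL1
  refine ⟨L * B, one_le_mul_of_one_le_of_one_le hL1' hB, fun n v hn hz N hN i hi => ?_⟩
  refine hsmall n hn _ (((contDiff_iterate hsmooth _).sub contDiff_const).sub
    (contDiff_iterate hsmooth N)) (derivativesBoundedBy_iterate_add_sub hsmooth hM hbound hn hN _)
    (fun z => ?_) i (Nat.lt_succ_iff.1 hi)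
  calc ‖P^[N + n] z - intVec v - P^[N] z‖ ≤ L ^ n * ‖P^[n] z - intVec v - z‖ :=
        hP.norm_iterate_add_sub_le hL hL1 hN v z
    _ ≤ L ^ n * ((L * B) ^ n)⁻¹ := by
        gcongr
        exact hz z
    _ = (B ^ n)⁻¹ := by
        rw [mul_pow, mul_inv, mul_inv_cancel_left₀ (pow_ne_zero n (by linarith))]

/-! ### Sums coded by 0/1 sequences -/

/-- The sum of those among the first `m` terms of `x` that the 0/1 sequence `a` selects. -/
def codeSum {M : Type*} [AddCommMonoid M] (a : ℕ → Bool) (x : ℕ → M) (m : ℕ) : M :=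
  ∑ j ∈ Finset.range m, if a j then x j else 0

theorem codeSum_zero {M : Type*} [AddCommMonoid M] (a : ℕ → Bool) (x : ℕ → M) :
    codeSum a x 0 = 0 :=
  rfl

theorem codeSum_succ {M : Type*} [AddCommMonoid M] (a : ℕ → Bool) (x : ℕ → M) (m : ℕ) :
    codeSum a x (m + 1) = codeSum a x m + if a m then x m else 0 :=
  Finset.sum_range_succ _ _

theorem codeSum_neg {M : Type*} [AddCommGroup M] (a : ℕ → Bool) (x : ℕ → M) (m : ℕ) :
    codeSum a (fun j => -x j) m = -codeSum a x m := by
  simp only [codeSum, ← Finset.sum_neg_distrib, neg_ite, neg_zero]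

theorem codeSum_congr {M : Type*} [AddCommMonoid M] {a b : ℕ → Bool} {m : ℕ}
    (h : ∀ j < m, a j = b j) (x : ℕ → M) : codeSum a x m = codeSum b x m :=
  Finset.sum_congr rfl fun j hj => by rw [h j (Finset.mem_range.1 hj)]

theorem codeSum_le {n : ℕ → ℕ} (hn : ∀ j, 2 * n j ≤ n (j + 1)) (a : ℕ → Bool) (m : ℕ) :
    codeSum a n m ≤ n m := by
  induction m with
  | zero => exact Nat.zero_le _
  | succ m ih =>
    have htwo := hn m
    rw [codeSum_succ]
    split_ifs <;> lia

section Separation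

variable {E : Type*} [NormedAddCommGroup E] {δ : ℕ → E} {a b : ℕ → Bool}

theorem norm_le_mul_pow_of_norm_succ_le (hδ : ∀ j, ‖δ (j + 1)‖ ≤ ‖δ j‖ / 4) (j m : ℕ) :
    ‖δ (j + m)‖ ≤ ‖δ j‖ * (1 / 4) ^ m := by
  induction m with
  | zero => simp
  | succ m ih =>
    rw [pow_succ, ← add_assoc]
    linarith [hδ (j + m)]

theorem dist_codeSum_sub_codeSum_succ_le (δ : ℕ → E) (a b : ℕ → Bool) (m : ℕ) :
    dist (codeSum a δ m - codeSum b δ m) (codeSum a δ (m + 1) - codeSum b δ (m + 1)) ≤ ‖δ m‖ := by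
  rw [codeSum_succ, codeSum_succ, add_sub_add_comm, dist_self_add_right]
  cases a m <;> cases b m <;> simp

/- After the first index `j` where the codes differ, the remaining terms add up to at most
`‖δ j‖ (1/4 + 1/16 + ⋯) = ‖δ j‖ / 3`. -/
theorem abs_norm_sub_norm_sub_le_of_tendsto_codeSum (hδ : ∀ j, ‖δ (j + 1)‖ ≤ ‖δ j‖ / 4) {j : ℕ}
    (hj : a j ≠ b j) (hlt : ∀ i < j, a i = b i) {x y : E}
    (hx : Tendsto (codeSum a δ) atTop (𝓝 x)) (hy : Tendsto (codeSum b δ) atTop (𝓝 y)) :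
    |‖δ j‖ - ‖x - y‖| ≤ ‖δ j‖ / 3 := by
  let u (m : ℕ) : E := codeSum a δ m - codeSum b δ m
  have hu : ‖u (j + 1)‖ = ‖δ j‖ := by
    simp only [u, codeSum_succ, codeSum_congr hlt, add_sub_add_left_eq_sub]
    cases ha : a j <;> cases hb : b j <;> simp_all
  have hgeom (m : ℕ) : dist (u (m + (j + 1))) (u (m + 1 + (j + 1))) ≤ ‖δ j‖ / 4 * (1 / 4) ^ m := by
    rw [add_right_comm m 1]
    calc dist (u (m + (j + 1))) (u (m + (j + 1) + 1)) ≤ ‖δ (j + (m + 1))‖ :=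
          add_left_comm m j 1 ▸ dist_codeSum_sub_codeSum_succ_le δ a b _
      _ ≤ ‖δ j‖ * (1 / 4) ^ (m + 1) := norm_le_mul_pow_of_norm_succ_le hδ j _
      _ = ‖δ j‖ / 4 * (1 / 4) ^ m := by ring
  have hdist : dist (u (0 + (j + 1))) (x - y) ≤ ‖δ j‖ / 4 / (1 - 1 / 4) :=
    dist_le_of_le_geometric_of_tendsto₀ _ _ (by norm_num) hgeom
      ((tendsto_add_atTop_iff_nat (j + 1)).2 (hx.sub hy))
  rw [zero_add, dist_eq_norm] at hdist
  rw [← hu] at hdist ⊢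
  exact (abs_norm_sub_norm_le _ _).trans (hdist.trans_eq (by ring))

theorem norm_sub_mem_Ioo_of_tendsto_codeSum (hδ : ∀ j, ‖δ (j + 1)‖ ≤ ‖δ j‖ / 4)
    (hne : ∀ j, δ j ≠ 0) (hzero : ‖δ 0‖ ≤ 1 / 8) (hab : a ≠ b) {x y : E}
    (hx : Tendsto (codeSum a δ) atTop (𝓝 x)) (hy : Tendsto (codeSum b δ) atTop (𝓝 y)) :
    ‖x - y‖ ∈ Set.Ioo 0 1 := by
  classical
  have hex := Function.ne_iff.1 hab
  have habs := abs_le.1 <| abs_norm_sub_norm_sub_le_of_tendsto_codeSum hδ (Nat.find_spec hex)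
    (fun i hi => not_not.1 (Nat.find_min hex hi)) hx hy
  have hle : ‖δ (Nat.find hex)‖ ≤ ‖δ 0‖ :=
    (antitone_nat_of_succ_le (f := fun j => ‖δ j‖) fun j => by
      linarith [hδ j, norm_nonneg (δ j)]) (Nat.zero_le _)
  have hpos := norm_pos_iff.2 (hne (Nat.find hex))
  constructor <;> linarith
end Separation

/-! ### Limits of iterates -/

/-- `n` is a time at which the map `P`, translated by `-v`, returns to the identity so closely that
its effect on each of the first `n` iterates of `P` is small in the `C^k` topology. -/
def IsCloseReturn (P : R2 → R2) (k : ℕ∞) (m n : ℕ) (v : ℤ × ℤ) : Prop :=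
  ∀ N ≤ n, DerivativesBoundedBy {i | i ≤ m ∧ (i : ℕ∞) ≤ k} ((1 / 2) ^ m)
    ((fun z => P^[N + n] z - intVec v) - P^[N])

theorem exists_contDiff_tendstoUniformly_codeSum {P : R2 → R2} {k : ℕ∞} (hP : ContDiff ℝ k P)
    {n : ℕ → ℕ} {v : ℕ → ℤ × ℤ} (hn : ∀ m, 2 * n m ≤ n (m + 1))
    (hreturn : ∀ m, IsCloseReturn P k m (n m) (v m)) (a : ℕ → Bool) :
    ∃ Q : R2 → R2, ContDiff ℝ k Q ∧
      TendstoUniformly (fun m z => P^[codeSum a n m] z - intVec (codeSum a v m)) Q atTop := by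
  refine exists_contDiff_tendstoUniformly (fun m => (contDiff_iterate hP _).sub contDiff_const)
    fun m i hi z => ?_
  cases ha : a m
  · have hzero : ((fun z => P^[codeSum a n (m + 1)] z - intVec (codeSum a v (m + 1))) -
        fun z => P^[codeSum a n m] z - intVec (codeSum a v m)) = 0 := by
      simp [codeSum_succ, ha]
    rw [hzero, iteratedFDeriv_zero]
    simp
  · have hstep : ((fun z => P^[codeSum a n (m + 1)] z - intVec (codeSum a v (m + 1))) -
        fun z => P^[codeSum a n m] z - intVec (codeSum a v m)) =
        (fun z => P^[codeSum a n m + n m] z - intVec (v m)) - P^[codeSum a n m] := by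
      ext1 z
      simp only [Pi.sub_apply, codeSum_succ, ha, if_true, intVec_add]
      abel
    exact hstep ▸ hreturn m _ (codeSum_le hn a m) i hi z

theorem natCast_codeSum_smul_sub_intVec (ω : R2) (a : ℕ → Bool) (n : ℕ → ℕ) (v : ℕ → ℤ × ℤ)
    (m : ℕ) : ((codeSum a n m : ℕ) : ℝ) • ω - intVec (codeSum a v m) =
      codeSum a (fun j => (n j : ℝ) • ω - intVec (v j)) m := by
  induction m with
  | zero => simp [codeSum_zero, intVec_zero]
  | succ m ih =>
    rw [codeSum_succ, codeSum_succ, codeSum_succ, ← ih]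
    split_ifs
    · rw [Nat.cast_add, add_smul, intVec_add]
      abel
    · simp

theorem Equivariant.of_tendsto {P : ℕ → R2 → R2} {Q : R2 → R2} (hP : ∀ m, Equivariant (P m))
    (hQ : ∀ z, Tendsto (fun m => P m z) atTop (𝓝 (Q z))) : Equivariant Q := fun z v =>
  tendsto_nhds_unique (hQ (z + intVec v)) <|
    ((hQ z).add_const (intVec v)).congr fun m => (hP m z v).symm

theorem leftInverse_of_tendstoUniformly {X : Type*} [UniformSpace X] [T2Space X]
    {P P' : ℕ → X → X} {Q Q' : X → X} (hP : ∀ z, Tendsto (fun m => P m z) atTop (𝓝 (Q z)))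
    (hP' : TendstoUniformly P' Q' atTop) (hQ' : Continuous Q')
    (hinv : ∀ m, Function.LeftInverse (P' m) (P m)) : Function.LeftInverse Q' Q := fun z =>
  tendsto_nhds_unique (hP'.tendsto_comp hQ'.continuousAt (hP z)) <|
    tendsto_const_nhds.congr fun m => (hinv m z).symm

theorem measurePreserving_of_tendsto {X Y : Type*} [MeasurableSpace X] [TopologicalSpace Y]
    [TopologicalSpace.PseudoMetrizableSpace Y] [MeasurableSpace Y] [BorelSpace Y] {μ : Measure X}
    [IsFiniteMeasure μ] {ν : Measure Y} {g : ℕ → X → Y} {p : X → Y}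
    (hg : ∀ m, MeasurePreserving (g m) μ ν)
    (hp : ∀ x, Tendsto (fun m => g m x) atTop (𝓝 (p x))) : MeasurePreserving p μ ν := by
  let := TopologicalSpace.pseudoMetrizableSpacePseudoMetric Y
  have hpm : Measurable p :=
    measurable_of_tendsto_metrizable (fun m => (hg m).measurable) (tendsto_pi_nhds.2 hp)
  have : IsFiniteMeasure ν := (hg 0).map_eq ▸ Measure.isFiniteMeasure_map μ (g 0)
  have : IsFiniteMeasure (μ.map p) := Measure.isFiniteMeasure_map μ p
  refine ⟨hpm, ext_of_forall_integral_eq_of_IsFiniteMeasure fun φ => ?_⟩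
  rw [integral_map hpm.aemeasurable φ.continuous.aestronglyMeasurable]
  refine tendsto_nhds_unique (f := fun m => ∫ x, φ (g m x) ∂μ) (l := atTop) ?_ ?_
  · exact tendsto_integral_of_dominated_convergence (fun _ => ‖φ‖)
      (fun m => (φ.continuous.measurable.comp (hg m).measurable).aestronglyMeasurable)
      (integrable_const _) (fun m => .of_forall fun x => φ.norm_coe_le_norm _)
      (.of_forall fun x => (φ.continuous.tendsto _).comp (hp x))
  · refine tendsto_const_nhds.congr fun m => ?_
    rw [← (hg m).map_eq, integral_map (hg m).measurable.aemeasurable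
      φ.continuous.aestronglyMeasurable]

theorem Equivariant.exists_homeomorph_isLift {e : R2 ≃ₜ R2} (he : Equivariant e) :
    ∃ p : T2 ≃ₜ T2, IsLift e p := by
  obtain ⟨p, hp⟩ := he.exists_isLift e.continuous
  obtain ⟨q, hq : IsLift e.symm q⟩ :=
    (he.inverse e.left_inv e.right_inv).exists_isLift e.symm.continuous
  have hqp : Function.LeftInverse q p := fun x => by
    obtain ⟨z, rfl⟩ := surjective_pr2 x
    rw [← hp, ← hq, e.symm_apply_apply]
  have hpq : Function.RightInverse q p := fun x => by
    obtain ⟨z, rfl⟩ := surjective_pr2 x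
    rw [← hq, ← hp, e.apply_symm_apply]
  exact ⟨⟨⟨p, q, hqp, hpq⟩, p.continuous, q.continuous⟩, hp⟩

theorem IsLift.tendsto {P : ℕ → R2 → R2} {Q : R2 → R2} {g : ℕ → T2 → T2} {p : T2 → T2}
    (hp : IsLift Q p) (hP : ∀ m, IsLift (P m) (g m))
    (hQ : ∀ z, Tendsto (fun m => P m z) atTop (𝓝 (Q z))) (x : T2) :
    Tendsto (fun m => g m x) atTop (𝓝 (p x)) := by
  obtain ⟨z, rfl⟩ := surjective_pr2 x
  rw [← hp z]
  exact ((continuous_pr2.tendsto _).comp (hQ z)).congr fun m => hP m z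

theorem exists_natCast_le_forall_lt {k r : ℕ∞} (hk : k + 1 ≤ r) (m : ℕ) :
    ∃ l : ℕ, (l : ℕ∞) ≤ r ∧ ∀ i : ℕ, i ≤ m → (i : ℕ∞) ≤ k → i < l := by
  rcases le_total ((m + 1 : ℕ) : ℕ∞) r with hm | hm
  · exact ⟨m + 1, hm, fun i hi _ => Nat.lt_succ_of_le hi⟩
  · lift r to ℕ using ne_top_of_le_ne_top (ENat.natCast_ne_top _) hm
    exact ⟨r, le_rfl, fun i _ hi => by exact_mod_cast (add_le_add_left hi 1).trans hk⟩

theorem Equivariant.exists_isCloseReturn_of_norm_le {P : R2 → R2} (hP : Equivariant P)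
    {k r : ℕ∞} (hsmooth : ContDiff ℝ r P) {L : NNReal} (hL : LipschitzWith L P) (hL1 : 1 ≤ L)
    (hk : k + 1 ≤ r) (m : ℕ) :
    ∃ B : ℝ, 1 ≤ B ∧ ∀ (n : ℕ) (v : ℤ × ℤ), n ≠ 0 →
      (∀ z, ‖P^[n] z - intVec v - z‖ ≤ (B ^ n)⁻¹) → IsCloseReturn P k m n v := by
  obtain ⟨l, hlr, hl⟩ := exists_natCast_le_forall_lt hk m
  have htwo : (1 : ℝ) ≤ 2 ^ m := one_le_pow₀ one_le_two
  obtain ⟨B, hB, hbound⟩ := hP.exists_derivativesBoundedBy_iterate_add_sub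
    (hsmooth.of_le (mod_cast hlr)) hL hL1 htwo
  refine ⟨B, hB, fun n v hn hz N hN => (hbound n v hn hz N hN).mono (fun i hi => hl i hi.1 hi.2) ?_⟩
  rw [one_div, inv_pow]
  exact inv_anti₀ (by positivity) (le_self_pow₀ htwo hn)

namespace LiouvillePseudoRotation

variable {r k : ℕ∞} {f : T2 → T2} {ω : R2} (S : LiouvillePseudoRotation r f ω)

theorem iterateSub_symm_apply (n : ℕ) (v : ℤ × ℤ) (z : R2) :
    (S.iterateSub n v).symm z = S.F.symm^[n] z - intVec (-v) := by
  rw [intVec_neg, sub_neg_eq_add]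
  exact S.equivariant_symm.iterate n z v

theorem exists_mem_volCentralizer_isLift_of_tendstoUniformly (S : LiouvillePseudoRotation r f ω)
    {N : ℕ → ℕ} {V : ℕ → ℤ × ℤ} {Q Q' : R2 → R2} (hQ : ContDiff ℝ k Q) (hQ' : ContDiff ℝ k Q')
    (htQ : TendstoUniformly (fun m => S.iterateSub (N m) (V m)) Q atTop)
    (htQ' : TendstoUniformly (fun m => (S.iterateSub (N m) (V m)).symm) Q' atTop) :
    ∃ p ∈ volCentralizer k f, IsLift Q p := by
  have hleft : Function.LeftInverse Q' Q := leftInverse_of_tendstoUniformly htQ.tendsto_at htQ'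
    hQ'.continuous fun m => (S.iterateSub (N m) (V m)).left_inv
  have hright : Function.RightInverse Q' Q := leftInverse_of_tendstoUniformly htQ'.tendsto_at htQ
    hQ.continuous fun m => (S.iterateSub (N m) (V m)).right_inv
  have hequiv : Equivariant Q :=
    .of_tendsto (fun m => S.equivariant_iterateSub (N m) (V m)) htQ.tendsto_at
  let e : R2 ≃ₜ R2 := ⟨⟨Q, Q', hleft, hright⟩, hQ.continuous, hQ'.continuous⟩
  obtain ⟨p, hp⟩ : ∃ p : T2 ≃ₜ T2, IsLift Q p :=
    Equivariant.exists_homeomorph_isLift (e := e) hequiv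
  have hlim (x : T2) : Tendsto (fun m => f^[N m] x) atTop (𝓝 (p x)) :=
    hp.tendsto (fun m => S.isLift_iterateSub (N m) (V m)) htQ.tendsto_at x
  refine ⟨⟨p, p.continuous⟩, ⟨⟨Q, Q', hp, hleft, hright, hQ, hQ'⟩,
    ⟨p.isHomeomorph, Q, e.isHomeomorph, hp, hequiv⟩,
    measurePreserving_of_tendsto (fun m => S.measurePreserving.iterate (N m)) hlim,
    funext fun x => ?_⟩, hp⟩
  refine tendsto_nhds_unique (hlim (f x)) ?_
  refine ((S.isotopicToId.1.continuous.tendsto _).comp (hlim x)).congr fun m => ?_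
  exact (Function.iterate_succ_apply' f (N m) x).symm

theorem exists_isCloseReturn (S : LiouvillePseudoRotation r f ω) (hk : k + 1 ≤ r) (m : ℕ) {ε : ℝ}
    (hε : 0 < ε) (N₀ : ℕ) : ∃ n v, N₀ ≤ n ∧ 1 ≤ n ∧ ‖(n : ℝ) • ω - intVec v‖ ≤ ε ∧
      IsCloseReturn S.F k m n v ∧ IsCloseReturn S.F.symm k m n (-v) := by
  obtain ⟨B, hB, hreturn⟩ :=
    S.equivariant_F.exists_isCloseReturn_of_norm_le S.contDiff_F S.lipschitz_F S.one_le_L hk m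
  obtain ⟨B', hB', hreturn'⟩ :=
    S.equivariant_symm.exists_isCloseReturn_of_norm_le S.contDiff_symm S.lipschitz_symm S.one_le_L
      hk m
  let A := max (max B B') ε⁻¹
  have hBA : B ≤ A := (le_max_left _ _).trans (le_max_left _ _)
  have hBA' : B' ≤ A := (le_max_right _ _).trans (le_max_left _ _)
  have hA : 1 ≤ A := hB.trans hBA
  obtain ⟨n, hn, hn1, v, hδ, hz⟩ :=
    frequently_atTop.1 (S.frequently_norm_iterateSub_mul_pow_le_one hA) N₀
  have hle {x C : ℝ} (hC : 0 < C) (hCA : C ≤ A ^ n) (hx0 : 0 ≤ x) (hx : x * A ^ n ≤ 1) :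
      x ≤ C⁻¹ := by
    rw [← one_div, le_div_iff₀ hC]
    exact (mul_le_mul_of_nonneg_left hCA hx0).trans hx
  have hpow {C : ℝ} (hC : 1 ≤ C) (hCA : C ≤ A) {z : R2} : ‖S.iterateSub n v z - z‖ ≤ (C ^ n)⁻¹ :=
    hle (by positivity) (pow_le_pow_left₀ (by positivity) hCA n) (norm_nonneg _) (hz z)
  refine ⟨n, v, hn, hn1, ?_, hreturn n v (by lia) fun z => hpow hB hBA,
    hreturn' n (-v) (by lia) fun z => ?_⟩
  · exact (hle (inv_pos.2 hε) ((le_max_right _ _).trans (le_self_pow₀ hA (by lia)))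
      (norm_nonneg _) hδ).trans_eq (inv_inv ε)
  · rw [← S.iterateSub_symm_apply, norm_sub_rev]
    simpa using hpow hB' hBA' (z := (S.iterateSub n v).symm z)

end LiouvillePseudoRotation

/-- Close returns `F ^ time m - vec m` of the lift `F` and of its inverse whose translation vectors
`time m • ω - vec m` are so small that they can be summed independently of each other. -/
structure LiouvillePseudoRotation.CloseReturnSeq {r : ℕ∞} {f : T2 → T2} {ω : R2}
    (S : LiouvillePseudoRotation r f ω) (k : ℕ∞) where
  time : ℕ → ℕ
  vec : ℕ → ℤ × ℤ
  one_le_time : ∀ m, 1 ≤ time m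
  two_mul_time_le : ∀ m, 2 * time m ≤ time (m + 1)
  norm_defect_zero_le : ‖(time 0 : ℝ) • ω - intVec (vec 0)‖ ≤ 1 / 8
  norm_defect_succ_le : ∀ m, ‖(time (m + 1) : ℝ) • ω - intVec (vec (m + 1))‖ ≤
    ‖(time m : ℝ) • ω - intVec (vec m)‖ / 4
  isCloseReturn : ∀ m, IsCloseReturn S.F k m (time m) (vec m)
  isCloseReturn_symm : ∀ m, IsCloseReturn S.F.symm k m (time m) (-vec m)

namespace LiouvillePseudoRotation

variable {r k : ℕ∞} {f : T2 → T2} {ω : R2} (S : LiouvillePseudoRotation r f ω)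

theorem nonempty_closeReturnSeq (hk : k + 1 ≤ r) : Nonempty (S.CloseReturnSeq k) := by
  obtain ⟨n₀, v₀, -, hn₀, hδ₀, h₀, h₀'⟩ :=
    S.exists_isCloseReturn hk 0 (ε := 1 / 8) (by norm_num) 0
  have hpos (p : {p : ℕ × (ℤ × ℤ) // 1 ≤ p.1}) : 0 < ‖(p.1.1 : ℝ) • ω - intVec p.1.2‖ / 4 :=
    div_pos (norm_pos_iff.2 (S.totallyIrrational.natCast_smul_sub_intVec_ne_zero p.2 _)) four_pos
  choose n v hn hn1 hδ h h' using fun m p =>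
    S.exists_isCloseReturn hk (m + 1) (hpos p) (2 * p.1.1)
  let s (m : ℕ) : {p : ℕ × (ℤ × ℤ) // 1 ≤ p.1} :=
    m.rec ⟨(n₀, v₀), hn₀⟩ fun m p => ⟨(n m p, v m p), hn1 m p⟩
  exact ⟨{
    time m := (s m).1.1
    vec m := (s m).1.2
    one_le_time m := (s m).2
    two_mul_time_le m := hn m (s m)
    norm_defect_zero_le := hδ₀
    norm_defect_succ_le m := hδ m (s m)
    isCloseReturn
      | 0 => h₀
      | m + 1 => h m (s m)
    isCloseReturn_symm
      | 0 => h₀'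
      | m + 1 => h' m (s m) }⟩

namespace CloseReturnSeq

variable {S} (R : S.CloseReturnSeq k)

/-- The vector by which `H` semi-conjugates `F ^ time m - vec m` to a translation. -/
def defect (m : ℕ) : R2 := (R.time m : ℝ) • ω - intVec (R.vec m)

theorem exists_mem_volCentralizer_tendsto_codeSum (hk : k ≤ r) (a : ℕ → Bool) :
    ∃ p ∈ volCentralizer k f, ∃ c, pr2 c = S.translationVec p ∧
      Tendsto (codeSum a R.defect) atTop (𝓝 c) := by
  obtain ⟨Q, hQ, htQ⟩ := exists_contDiff_tendstoUniformly_codeSum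
    (S.contDiff_F.of_le (mod_cast hk)) R.two_mul_time_le R.isCloseReturn a
  obtain ⟨Q', hQ', htQ'⟩ := exists_contDiff_tendstoUniformly_codeSum
    (S.contDiff_symm.of_le (mod_cast hk)) R.two_mul_time_le R.isCloseReturn_symm a
  simp only [codeSum_neg, ← S.iterateSub_symm_apply] at htQ'
  obtain ⟨p, hp, hQp⟩ := S.exists_mem_volCentralizer_isLift_of_tendstoUniformly hQ hQ' htQ htQ'
  refine ⟨p, hp, S.H (Q 0) - S.H 0, ?_, ?_⟩
  · rw [pr2_sub, S.isLift_H, S.isLift_H, hQp]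
    rfl
  · refine (((S.continuous_H.tendsto _).comp (htQ.tendsto_at 0)).sub_const
      (S.H 0)).congr fun m => ?_
    rw [Function.comp_apply, ← S.iterateSub_apply, (S.semiconj_iterateSub _ _).eq,
      add_sub_cancel_left]
    exact natCast_codeSum_smul_sub_intVec ω a R.time R.vec m

theorem eq_of_pr2_eq_of_tendsto_codeSum {a b : ℕ → Bool} {x y : R2} (hxy : pr2 x = pr2 y)
    (hx : Tendsto (codeSum a R.defect) atTop (𝓝 x))
    (hy : Tendsto (codeSum b R.defect) atTop (𝓝 y)) : a = b := by
  by_contra hab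
  obtain ⟨hpos, hlt⟩ := norm_sub_mem_Ioo_of_tendsto_codeSum R.norm_defect_succ_le
    (fun m => S.totallyIrrational.natCast_smul_sub_intVec_ne_zero (R.one_le_time m) _)
    R.norm_defect_zero_le hab hx hy
  obtain ⟨v, rfl⟩ := pr2_eq_pr2_iff.1 hxy
  rw [add_sub_cancel_left] at hpos hlt
  exact hpos.ne' (norm_eq_zero.2 (intVec_eq_zero_of_norm_lt_one hlt))

end CloseReturnSeq

theorem not_countable_volCentralizer (S : LiouvillePseudoRotation r f ω) (hk : k + 1 ≤ r) :
    ¬ (volCentralizer k f).Countable := fun hcount => by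
  obtain ⟨R⟩ := S.nonempty_closeReturnSeq hk
  choose p hp c hpc hc using
    R.exists_mem_volCentralizer_tendsto_codeSum (le_self_add.trans hk)
  have hinj : Function.Injective fun a => (⟨p a, hp a⟩ : volCentralizer k f) := fun a b hab =>
    R.eq_of_pr2_eq_of_tendsto_codeSum
      ((hpc a).trans ((congrArg S.translationVec (Subtype.ext_iff.1 hab)).trans (hpc b).symm))
      (hc a) (hc b)
  have := hcount.to_subtype
  refine (Cardinal.cantor Cardinal.aleph0).not_ge ?_
  simpa using Cardinal.mk_le_aleph0_iff.2 hinj.countable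

end LiouvillePseudoRotation

theorem centralizers_of_semi_conjugate_pseudo_rotation_general {r k : ℕ∞} (hk : k + 1 ≤ r)
    {f : T2 → T2} {ω : R2} (hω : TotallyIrrationalVec ω) (hω' : SuperLiouville ω)
    (hiso : IsotopicToId f) (hf : IsCrDiffeo r f) (hmeas : MeasurePreserving f volume volume)
    (hsemi : RegSemiConj f (pr2 ω)) :
    (∃ Φ : C(T2, T2) → T2,
        Set.InjOn Φ (volCentralizer k f) ∧
        (∀ g ∈ volCentralizer k f, ∀ g' ∈ volCentralizer k f,
          g.comp g' ∈ volCentralizer k f ∧ Φ (g.comp g') = Φ g + Φ g') ∧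
        ¬ (volCentralizer k f).Countable) ∧
      (IsCompact (volCentralizer k f) → TopLinearizable f) ∧
      (TopLinearizable f → IsCompact (closure (volCentralizer k f))) := by
  obtain ⟨S⟩ := nonempty_liouvillePseudoRotation (le_add_self.trans hk) hω hω' hiso hf hmeas hsemi
  have hkr : k ≤ r := le_self_add.trans hk
  exact ⟨⟨S.translationVec, S.injOn_translationVec,
      fun g hg g' hg' => ⟨comp_mem_volCentralizer hg hg', S.translationVec_comp hg g'⟩,
      S.not_countable_volCentralizer hk⟩,
    S.topLinearizable_of_isCompact hkr, S.isCompact_closure_of_topLinearizable⟩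

/-- **Theorem 1.4.** Let f be a volume-preserving C^r (r ≥ 2, possibly r = ∞) diffeomorphism of
𝕋², isotopic to the identity, regularly semi-conjugate to the translation T_ω̄ with ω̄
totally irrational and super-Liouvillean, and let G_f be its centralizers in
Diff^{r−1}(𝕋², Vol) ∩ Homeo_*(𝕋²). Then G_f is isomorphic to an uncountable subgroup of
ℝ²/ℤ²; moreover if G_f is C⁰-compact then f is topologically linearizable, and if f is
topologically linearizable then G_f is C⁰-pre-compact. -/
theorem centralizers_of_semi_conjugate_pseudo_rotation
    (r : ℕ∞) (hr : 2 ≤ r)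
    (f : T2 → T2) (ω : R2) (w : T2)
    (hw : pr2 ω = w)
    (hti : TotallyIrrationalVec ω)
    (hsl : SuperLiouville ω)
    (hiso : IsotopicToId f)
    (hcr : IsCrDiffeo r f)
    (hmp : MeasurePreserving f (volume : Measure T2) volume)
    (hsc : RegSemiConj f w)
    (GF : Set C(T2, T2))
    (hGF : GF = {g : C(T2, T2) | IsCrDiffeo (r - 1) ⇑g ∧ IsotopicToId ⇑g ∧
      MeasurePreserving ⇑g (volume : Measure T2) volume ∧ ⇑g ∘ f = f ∘ ⇑g}) :
    (∃ Φ : C(T2, T2) → T2,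
        Set.InjOn Φ GF ∧
        (∀ g ∈ GF, ∀ g' ∈ GF, g.comp g' ∈ GF ∧ Φ (g.comp g') = Φ g + Φ g') ∧
        ¬ GF.Countable) ∧
      (IsCompact GF → TopLinearizable f) ∧
      (TopLinearizable f → IsCompact (closure GF)) := by
  subst hw hGF
  exact centralizers_of_semi_conjugate_pseudo_rotation_general
    (tsub_add_cancel_of_le (one_le_two.trans hr)).le hti hsl hiso hcr hmp hsc
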